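/- arXiv:2502.11615 — 2 statements merged into one kernel-verified Lean document; each statement's English description precedes it below -/
import Mathlib

section
/- The space X_{=n} of mm-isomorphism classes of metric measure spaces whose support has exactly n points, equipped with the box distance, has covering dimension (n+2)(n−1)/2. -/
open MeasureTheory

/-- `[n]²`: the set of 2-element subsets of `{0, …, n-1}`. -/
abbrev Pairs (n : ℕ) := {s : Finset (Fin n) // s.card = 2}

/-- The 2-element subset `{i, j}` for `i ≠ j`. -/
def pairOf {n : ℕ} (i j : Fin n) (h : i ≠ j) : Pairs n :=
  ⟨{i, j}, Finset.card_pair h⟩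

/-- `R_n ⊆ (0,∞)^{[n]²}`. -/
def RnSet (n : ℕ) : Set (Pairs n → ℝ) :=
  {r | (∀ e, 0 < r e) ∧
    ∀ (i j k : Fin n) (hij : i ≠ j) (hjk : j ≠ k) (hik : i ≠ k),
      r (pairOf i k hik) ≤ r (pairOf i j hij) + r (pairOf j k hjk)}

/-- The open `(n-1)`-simplex: strictly positive weights summing to `1`. -/
def SimplexSet (n : ℕ) : Set (Fin n → ℝ) :=
  {s | (∀ i, 0 < s i) ∧ ∑ i, s i = 1}

/-- The distance function `d_r` on `{0, …, n-1}` induced by `r`. -/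
noncomputable def drDist {n : ℕ} (r : Pairs n → ℝ) (i j : Fin n) : ℝ :=
  if h : i = j then 0 else r (pairOf i j h)

/-- The probability measure `μ_s` on `{0, …, n-1}` with weights `s`. -/
noncomputable def muS {n : ℕ} (s : Fin n → ℝ) : Measure (Fin n) :=
  ∑ i : Fin n, ENNReal.ofReal (s i) • Measure.dirac i

/-- The distortion of a relation `S`, with respect to distance functions `dX`, `dY`. -/
noncomputable def disF {X Y : Type*} (dX : X → X → ℝ) (dY : Y → Y → ℝ)
    (S : Set (X × Y)) : ℝ :=
  sSup {v | ∃ p ∈ S, ∃ q ∈ S, v = |dX p.1 q.1 - dY p.2 q.2|}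

/-- The box distance between metric measure spaces given by distance functions and
measures (every subset of a finite space being closed). -/
noncomputable def boxDistF {X Y : Type*} [MeasurableSpace X] [MeasurableSpace Y]
    (dX : X → X → ℝ) (dY : Y → Y → ℝ) (μ : Measure X) (ν : Measure Y) : ℝ :=
  sInf {v | ∃ π : Measure (X × Y), π.map Prod.fst = μ ∧ π.map Prod.snd = ν ∧
    ∃ S : Set (X × Y), v = max (1 - (π S).toReal) (disF dX dY S)}

/-- Parameters `(r, s)` for an `n`-point metric measure space. -/
def MMparam (n : ℕ) : Set ((Pairs n → ℝ) × (Fin n → ℝ)) :=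
  RnSet n ×ˢ SimplexSet n

/-- The box (pseudo)distance between the metric measure spaces corresponding to two
parameters. -/
noncomputable def boxD {n : ℕ} (p q : (Pairs n → ℝ) × (Fin n → ℝ)) : ℝ :=
  boxDistF (drDist p.1) (drDist q.1) (muS p.2) (muS q.2)

/-- `X_{=n}`: the parameter space of `n`-point metric measure spaces with the topology of
the box distance (generated by the open balls of the box distance). -/
noncomputable def boxTop (n : ℕ) : TopologicalSpace ↥(MMparam n) :=
  TopologicalSpace.generateFrom
    {B | ∃ (x : ↥(MMparam n)) (ε : ℝ), 0 < ε ∧ B = {y : ↥(MMparam n) | boxD x.1 y.1 < ε}}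

/-- The covering dimension of `X` is at most `n`. -/
def CovDimLE (X : Type*) [TopologicalSpace X] (n : ℕ) : Prop :=
  ∀ U : Set (Set X), (∀ u ∈ U, IsOpen u) → ⋃₀ U = Set.univ →
    ∃ V : Set (Set X), (∀ v ∈ V, IsOpen v) ∧ ⋃₀ V = Set.univ ∧
      (∀ v ∈ V, ∃ u ∈ U, v ⊆ u) ∧ ∀ x : X, {v ∈ V | x ∈ v}.encard ≤ (n : ℕ∞) + 1

/-- The covering dimension of a topological space. -/
noncomputable def covDim (X : Type*) [TopologicalSpace X] : ℕ∞ :=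
  sInf {m : ℕ∞ | ∃ k : ℕ, m = (k : ℕ∞) ∧ CovDimLE X k}

section boxchar
open Finset

theorem muS_singleton {n : ℕ} (s : Fin n → ℝ) (i : Fin n) : muS s {i} = ENNReal.ofReal (s i) := by
  classical
  unfold muS
  rw [Measure.finsetSum_apply]
  rw [Finset.sum_eq_single i]
  · simp
  · intro j _ hj
    simp [hj]
  · simp

theorem wmeas_apply {α : Type} [Fintype α] [DecidableEq α] [MeasurableSpace α] [MeasurableSingletonClass α]
    (w : α → ℝ) (a : α) :
    (∑ p : α, ENNReal.ofReal (w p) • Measure.dirac p) {a} = ENNReal.ofReal (w a) := by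
  rw [Measure.finsetSum_apply]
  rw [Finset.sum_eq_single a]
  · simp
  · intro j _ hj
    simp [hj]
  · simp

theorem disF_lt {n : ℕ} (dX dY : Fin n → Fin n → ℝ) (S : Set (Fin n × Fin n)) {ε : ℝ} (hε : 0 < ε) :
    disF dX dY S < ε ↔ ∀ p ∈ S, ∀ q ∈ S, |dX p.1 q.1 - dY p.2 q.2| < ε := by
  have hfin : {v | ∃ p ∈ S, ∃ q ∈ S, v = |dX p.1 q.1 - dY p.2 q.2|}.Finite := by
    refine (Set.finite_range fun pq : (Fin n × Fin n) × (Fin n × Fin n) =>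
      |dX pq.1.1 pq.2.1 - dY pq.1.2 pq.2.2|).subset ?_
    rintro _ ⟨p, _, q, _, rfl⟩
    exact ⟨(p, q), rfl⟩
  unfold disF
  constructor
  · intro h p hp q hq
    exact (le_csSup hfin.bddAbove ⟨p, hp, q, hq, rfl⟩).trans_lt h
  · intro h
    rcases Set.eq_empty_or_nonempty {v | ∃ p ∈ S, ∃ q ∈ S, v = |dX p.1 q.1 - dY p.2 q.2|} with h0 | h0
    · rw [h0, Real.sSup_empty]; exact hε
    · obtain ⟨p, hp, q, hq, he⟩ := h0.csSup_mem hfin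
      rw [he]; exact h p hp q hq

theorem boxDistF_lt {n : ℕ} (dX dY : Fin n → Fin n → ℝ) (s t : Fin n → ℝ) (hs : ∀ i, 0 ≤ s i)
    (ht : ∀ i, 0 ≤ t i) (hs1 : ∑ i, s i = 1) (ht1 : ∑ i, t i = 1) {ε : ℝ} (hε : 0 < ε) :
    boxDistF dX dY (muS s) (muS t) < ε ↔ ∃ w : Fin n × Fin n → ℝ, (∀ p, 0 ≤ w p) ∧
      (∀ i, ∑ j, w (i, j) = s i) ∧ (∀ j, ∑ i, w (i, j) = t j) ∧
      ∃ S : Finset (Fin n × Fin n), 1 - ε < ∑ p ∈ S, w p ∧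
        ∀ p ∈ S, ∀ q ∈ S, |dX p.1 q.1 - dY p.2 q.2| < ε := by
  classical
  -- measures from weights
  have hmk : ∀ w : Fin n × Fin n → ℝ, (∀ p, 0 ≤ w p) → (∀ i, ∑ j, w (i, j) = s i) →
      (∀ j, ∑ i, w (i, j) = t j) → ∃ π : Measure (Fin n × Fin n), π.map Prod.fst = muS s ∧
      π.map Prod.snd = muS t ∧ ∀ S : Finset (Fin n × Fin n), π S = ENNReal.ofReal (∑ p ∈ S, w p) := by
    intro w hw h1 h2
    have hS : ∀ S : Finset (Fin n × Fin n), (∑ p, ENNReal.ofReal (w p) • Measure.dirac p : Measure (Fin n × Fin n)) S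
        = ENNReal.ofReal (∑ p ∈ S, w p) := by
      intro S
      rw [← sum_measure_singleton, ENNReal.ofReal_sum_of_nonneg (fun p _ => hw p)]
      exact Finset.sum_congr rfl fun p _ => wmeas_apply w p
    refine ⟨_, ?_, ?_, hS⟩
    · rw [Measure.ext_iff_singleton]
      intro i
      rw [Measure.map_apply measurable_fst (measurableSet_singleton i), muS_singleton, ← h1 i]
      have : (Prod.fst ⁻¹' {i} : Set (Fin n × Fin n)) = ((({i} : Finset (Fin n)) ×ˢ Finset.univ : Finset (Fin n × Fin n)) : Set (Fin n × Fin n)) := by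
        ext ⟨a, b⟩; simp [eq_comm]
      rw [this, hS, Finset.sum_product]; simp
    · rw [Measure.ext_iff_singleton]
      intro i
      rw [Measure.map_apply measurable_snd (measurableSet_singleton i), muS_singleton, ← h2 i]
      have : (Prod.snd ⁻¹' {i} : Set (Fin n × Fin n)) = ((Finset.univ ×ˢ ({i} : Finset (Fin n)) : Finset (Fin n × Fin n)) : Set (Fin n × Fin n)) := by
        ext ⟨a, b⟩; simp [eq_comm]
      rw [this, hS, Finset.sum_product]; simp
  have hbdd : BddBelow {v | ∃ π : Measure (Fin n × Fin n), π.map Prod.fst = muS s ∧ π.map Prod.snd = muS t ∧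
    ∃ S : Set (Fin n × Fin n), v = max (1 - (π S).toReal) (disF dX dY S)} := by
    refine ⟨0, ?_⟩
    rintro _ ⟨π, _, _, S, rfl⟩
    refine le_max_of_le_right ?_
    apply Real.sSup_nonneg
    rintro _ ⟨p, _, q, _, rfl⟩
    positivity
  have hne : {v | ∃ π : Measure (Fin n × Fin n), π.map Prod.fst = muS s ∧ π.map Prod.snd = muS t ∧
    ∃ S : Set (Fin n × Fin n), v = max (1 - (π S).toReal) (disF dX dY S)}.Nonempty := by
    obtain ⟨π, h1, h2, -⟩ := hmk (fun p => s p.1 * t p.2) (fun p => mul_nonneg (hs _) (ht _))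
      (fun i => by simp [← Finset.mul_sum, ht1]) (fun i => by simp [← Finset.sum_mul, hs1])
    exact ⟨_, π, h1, h2, ∅, rfl⟩
  unfold boxDistF
  rw [csInf_lt_iff hbdd hne]
  constructor
  · rintro ⟨_, ⟨π, h1, h2, S, rfl⟩, hlt⟩
    rw [max_lt_iff, disF_lt dX dY S hε] at hlt
    have hfin : ∀ p, π {p} ≠ ⊤ := by
      intro p
      have : π {p} ≤ (π.map Prod.fst) {p.1} := by
        rw [Measure.map_apply measurable_fst (measurableSet_singleton _)]
        apply measure_mono
        rintro _ rfl; simp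
      rw [h1, muS_singleton] at this
      exact ne_top_of_le_ne_top ENNReal.ofReal_ne_top this
    have hsum : ∀ T : Finset (Fin n × Fin n), ∑ p ∈ T, (π {p}).toReal = (π T).toReal := by
      intro T
      rw [← sum_measure_singleton, ENNReal.toReal_sum (fun p _ => hfin p)]
    refine ⟨fun p => (π {p}).toReal, fun p => ENNReal.toReal_nonneg, ?_, ?_, S.toFinset, ?_, ?_⟩
    · intro i
      have e := hsum (({i} : Finset (Fin n)) ×ˢ Finset.univ)
      have : (Prod.fst ⁻¹' {i} : Set (Fin n × Fin n)) = ((({i} : Finset (Fin n)) ×ˢ Finset.univ : Finset (Fin n × Fin n)) : Set (Fin n × Fin n)) := by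
        ext ⟨a, b⟩; simp [eq_comm]
      rw [← this, ← Measure.map_apply measurable_fst (measurableSet_singleton i), h1, muS_singleton,
        ENNReal.toReal_ofReal (hs i), Finset.sum_product] at e
      simpa using e
    · intro i
      have e := hsum (Finset.univ ×ˢ ({i} : Finset (Fin n)))
      have : (Prod.snd ⁻¹' {i} : Set (Fin n × Fin n)) = ((Finset.univ ×ˢ ({i} : Finset (Fin n)) : Finset (Fin n × Fin n)) : Set (Fin n × Fin n)) := by
        ext ⟨a, b⟩; simp [eq_comm]
      rw [← this, ← Measure.map_apply measurable_snd (measurableSet_singleton i), h2, muS_singleton,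
        ENNReal.toReal_ofReal (ht i), Finset.sum_product] at e
      simpa using e
    · rw [hsum]
      simp only [Set.coe_toFinset]
      linarith [hlt.1]
    · intro p hp q hq
      exact hlt.2 p (by simpa using hp) q (by simpa using hq)
  · rintro ⟨w, hw, h1, h2, S, hS, hd⟩
    obtain ⟨π, e1, e2, e3⟩ := hmk w hw h1 h2
    refine ⟨_, ⟨π, e1, e2, (S : Set (Fin n × Fin n)), rfl⟩, ?_⟩
    rw [max_lt_iff, disF_lt dX dY _ hε, e3, ENNReal.toReal_ofReal (Finset.sum_nonneg fun p _ => hw p)]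
    exact ⟨by linarith, fun p hp q hq => hd p (by simpa using hp) q (by simpa using hq)⟩

/-- the permutation of pairs induced by a permutation -/
def pairPerm {n : ℕ} (σ : Equiv.Perm (Fin n)) : Equiv.Perm (Pairs n) where
  toFun e := ⟨e.1.map σ.toEmbedding, by rw [Finset.card_map]; exact e.2⟩
  invFun e := ⟨e.1.map σ.symm.toEmbedding, by rw [Finset.card_map]; exact e.2⟩
  left_inv e := by
    apply Subtype.ext; ext a; simp
  right_inv e := by
    apply Subtype.ext; ext a; simp

theorem pairPerm_mul {n : ℕ} (σ τ : Equiv.Perm (Fin n)) : pairPerm (σ * τ) = pairPerm σ * pairPerm τ := by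
  apply Equiv.ext; intro e
  apply Subtype.ext
  change e.1.map _ = (e.1.map _).map _
  rw [Finset.map_map]; rfl

theorem pairPerm_one {n : ℕ} : pairPerm (1 : Equiv.Perm (Fin n)) = 1 := by
  apply Equiv.ext; intro e
  apply Subtype.ext
  change e.1.map _ = e.1
  exact Finset.map_refl

theorem pairPerm_pairOf {n : ℕ} (σ : Equiv.Perm (Fin n)) (i j : Fin n) (h : i ≠ j) :
    pairPerm σ (pairOf i j h) = pairOf (σ i) (σ j) (fun h' => h (σ.injective h')) := by
  apply Subtype.ext
  simp [pairPerm, pairOf]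

/-- action of permutations on parameters -/
def pact {n : ℕ} (σ : Equiv.Perm (Fin n)) (p : (Pairs n → ℝ) × (Fin n → ℝ)) : (Pairs n → ℝ) × (Fin n → ℝ) :=
  (fun e => p.1 (pairPerm σ e), fun i => p.2 (σ i))

theorem pact_mem {n : ℕ} (σ : Equiv.Perm (Fin n)) {p : (Pairs n → ℝ) × (Fin n → ℝ)} (hp : p ∈ MMparam n) :
    pact σ p ∈ MMparam n := by
  obtain ⟨⟨h1, h2⟩, h3, h4⟩ := hp
  refine ⟨⟨fun e => h1 _, ?_⟩, fun i => h3 _, ?_⟩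
  · intro i j k hij hjk hik
    simp only [pact, pairPerm_pairOf]
    exact h2 _ _ _ _ _ _
  · simp only [pact]
    rw [Equiv.sum_comp σ p.2]; exact h4

theorem drDist_pact {n : ℕ} (σ : Equiv.Perm (Fin n)) (p : (Pairs n → ℝ) × (Fin n → ℝ)) (i j : Fin n) :
    drDist (pact σ p).1 i j = drDist p.1 (σ i) (σ j) := by
  unfold drDist
  by_cases h : i = j
  · simp [h]
  · have h' : σ i ≠ σ j := fun h' => h (σ.injective h')
    simp [h, pact, pairPerm_pairOf]

theorem boxD_lt {n : ℕ} {x y : (Pairs n → ℝ) × (Fin n → ℝ)} (hx : x ∈ MMparam n) (hy : y ∈ MMparam n)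
    {ε : ℝ} (hε : 0 < ε) : boxD x y < ε ↔ ∃ w : Fin n × Fin n → ℝ, (∀ p, 0 ≤ w p) ∧
      (∀ i, ∑ j, w (i, j) = x.2 i) ∧ (∀ j, ∑ i, w (i, j) = y.2 j) ∧
      ∃ S : Finset (Fin n × Fin n), 1 - ε < ∑ p ∈ S, w p ∧
        ∀ p ∈ S, ∀ q ∈ S, |drDist x.1 p.1 q.1 - drDist y.1 p.2 q.2| < ε :=
  boxDistF_lt _ _ _ _ (fun i => (hx.2.1 i).le) (fun i => (hy.2.1 i).le) hx.2.2 hy.2.2 hε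

theorem boxD_self {n : ℕ} {x : (Pairs n → ℝ) × (Fin n → ℝ)} (hx : x ∈ MMparam n)
    {ε : ℝ} (hε : 0 < ε) : boxD x x < ε := by
  classical
  rw [boxD_lt hx hx hε]
  refine ⟨fun p => if p.1 = p.2 then x.2 p.1 else 0, ?_, ?_, ?_, Finset.univ.filter fun p => p.1 = p.2, ?_, ?_⟩
  · intro p
    dsimp only
    split_ifs
    · exact (hx.2.1 _).le
    · exact le_rfl
  · intro i; simp
  · intro i; simp
  · rw [Finset.sum_filter_of_ne (by intro p _ h; by_contra h'; simp [h'] at h)]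
    rw [Fintype.sum_prod_type]
    simp only [Finset.sum_ite_eq, Finset.mem_univ, if_true]
    have := hx.2.2
    linarith
  · intro p hp q hq
    simp only [Finset.mem_filter, Finset.mem_univ, true_and] at hp hq
    rw [hp, hq]; simpa using hε

theorem boxD_pact {n : ℕ} {x y : (Pairs n → ℝ) × (Fin n → ℝ)} (hx : x ∈ MMparam n) (hy : y ∈ MMparam n)
    (σ : Equiv.Perm (Fin n)) {ε : ℝ} (hε : 0 < ε) (h : boxD x y < ε) : boxD x (pact σ y) < ε := by
  classical
  rw [boxD_lt hx hy hε] at h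
  rw [boxD_lt hx (pact_mem σ hy) hε]
  obtain ⟨w, hw, h1, h2, S, hS, hd⟩ := h
  refine ⟨fun p => w (p.1, σ p.2), fun p => hw _, ?_, fun j => h2 (σ j),
    S.map (Equiv.prodCongr (Equiv.refl _) σ.symm).toEmbedding, ?_, ?_⟩
  · intro i
    rw [← h1 i]
    exact Equiv.sum_comp σ (fun j => w (i, j))
  · rw [Finset.sum_map]; simpa using hS
  · intro p hp q hq
    rw [Finset.mem_map] at hp hq
    obtain ⟨p, hp, rfl⟩ := hp
    obtain ⟨q, hq, rfl⟩ := hq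
    rw [drDist_pact]
    simpa using hd p hp q hq

theorem drDist_close {n : ℕ} (r r' : Pairs n → ℝ) {δ : ℝ} (hδ : 0 ≤ δ) (h : dist r r' ≤ δ) (i j : Fin n) :
    |drDist r i j - drDist r' i j| ≤ δ := by
  unfold drDist
  split_ifs with hij
  · simpa using hδ
  · have := dist_le_pi_dist r r' (pairOf i j hij)
    rw [Real.dist_eq] at this
    linarith

theorem boxball_open {n : ℕ} (x : ↥(MMparam n)) (ε : ℝ) (hε : 0 < ε) :
    IsOpen {y : ↥(MMparam n) | boxD x.1 y.1 < ε} := by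
  classical
  rw [isOpen_iff_mem_nhds]
  intro y hy
  have hy' : boxD x.1 y.1 < ε := hy
  rw [boxD_lt x.2 y.2 hε] at hy'
  obtain ⟨w, hw, h1, h2, S, hS, hd⟩ := hy'
  -- choose slack
  obtain ⟨η, hη, hη1, hη2, hη3⟩ : ∃ η : ℝ, 0 < η ∧ η < 1 ∧ 1 - ε + η < ∑ p ∈ S, w p ∧
      ∀ p ∈ S, ∀ q ∈ S, |drDist x.1.1 p.1 q.1 - drDist y.1.1 p.2 q.2| + η < ε := by
    have e1 : ∀ᶠ η : ℝ in nhdsWithin 0 (Set.Ioi 0), 0 < η := eventually_mem_nhdsWithin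
    have gen : ∀ a b : ℝ, a < b → ∀ᶠ η : ℝ in nhdsWithin 0 (Set.Ioi 0), a + η < b := by
      intro a b hab
      apply Filter.Eventually.filter_mono nhdsWithin_le_nhds
      have : ContinuousAt (fun η : ℝ => a + η) 0 := by fun_prop
      exact this.eventually (gt_mem_nhds (by simpa using hab))
    have e2 := gen 0 1 (by norm_num)
    have e3 := gen _ _ hS
    have e4 : ∀ᶠ η : ℝ in nhdsWithin 0 (Set.Ioi 0), ∀ p ∈ S, ∀ q ∈ S,
        |drDist x.1.1 p.1 q.1 - drDist y.1.1 p.2 q.2| + η < ε := by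
      rw [Filter.eventually_all_finset]
      intro p hp
      rw [Filter.eventually_all_finset]
      intro q hq
      exact gen _ _ (hd p hp q hq)
    obtain ⟨η, a1, a2, a3, a4⟩ := (e1.and (e2.and (e3.and e4))).exists
    exact ⟨η, a1, by linarith, a3, a4⟩
  have hs1 : ∀ᶠ z : ↥(MMparam n) in nhds y, ∀ j, (1 - η) * y.1.2 j < z.1.2 j := by
    rw [Filter.eventually_all]
    intro j
    have hc : ContinuousAt (fun z : ↥(MMparam n) => z.1.2 j) y := by
      exact ((continuous_apply j).comp (continuous_snd.comp continuous_subtype_val)).continuousAt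
    have := y.2.2.1 j
    exact hc.eventually (lt_mem_nhds (by nlinarith))
  have hs2 : ∀ᶠ z : ↥(MMparam n) in nhds y, dist z.1.1 y.1.1 < η := by
    have hc : ContinuousAt (fun z : ↥(MMparam n) => z.1.1) y :=
      (continuous_fst.comp continuous_subtype_val).continuousAt
    exact hc.eventually (Metric.ball_mem_nhds _ hη)
  filter_upwards [hs1, hs2] with z hz1 hz2
  change boxD x.1 z.1 < ε
  rw [boxD_lt x.2 z.2 hε]
  refine ⟨fun p => (1 - η) * w p + x.1.2 p.1 * (z.1.2 p.2 - (1 - η) * y.1.2 p.2), ?_, ?_, ?_, S, ?_, ?_⟩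
  · intro p
    have := hw p
    have := hz1 p.2
    have := x.2.2.1 p.1
    have : 0 ≤ (1 - η) * w p := mul_nonneg (by linarith) (hw p)
    have : 0 ≤ x.1.2 p.1 * (z.1.2 p.2 - (1 - η) * y.1.2 p.2) := mul_nonneg (by linarith) (by linarith)
    linarith
  · intro i
    dsimp only
    rw [Finset.sum_add_distrib, ← Finset.mul_sum, ← Finset.mul_sum, h1, Finset.sum_sub_distrib, ← Finset.mul_sum,
      z.2.2.2, y.2.2.2]
    ring
  · intro j
    dsimp only
    rw [Finset.sum_add_distrib, ← Finset.mul_sum, ← Finset.sum_mul, h2, x.2.2.2]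
    ring
  · have hSle : ∑ p ∈ S, w p ≤ 1 := by
      calc ∑ p ∈ S, w p ≤ ∑ p, w p := Finset.sum_le_univ_sum_of_nonneg hw
        _ = 1 := by
          rw [Fintype.sum_prod_type]; simp only [h1]; exact x.2.2.2
    have hge : (1 - η) * ∑ p ∈ S, w p ≤ ∑ p ∈ S, ((1 - η) * w p + x.1.2 p.1 * (z.1.2 p.2 - (1 - η) * y.1.2 p.2)) := by
      rw [Finset.mul_sum]
      apply Finset.sum_le_sum
      intro p _
      have : 0 ≤ x.1.2 p.1 * (z.1.2 p.2 - (1 - η) * y.1.2 p.2) :=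
        mul_nonneg (x.2.2.1 _).le (by linarith [hz1 p.2])
      linarith
    nlinarith
  · intro p hp q hq
    have e1 := hη3 p hp q hq
    have e2 := drDist_close z.1.1 y.1.1 hη.le hz2.le p.2 q.2
    have : drDist x.1.1 p.1 q.1 - drDist z.1.1 p.2 q.2 =
      (drDist x.1.1 p.1 q.1 - drDist y.1.1 p.2 q.2) - (drDist z.1.1 p.2 q.2 - drDist y.1.1 p.2 q.2) := by ring
    rw [this]
    have := abs_sub (drDist x.1.1 p.1 q.1 - drDist y.1.1 p.2 q.2) (drDist z.1.1 p.2 q.2 - drDist y.1.1 p.2 q.2)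
    linarith

theorem boxD_perm {n : ℕ} (x : ↥(MMparam n)) {δ : ℝ} (hδ : 0 < δ) : ∃ ε > 0, ∀ y : ↥(MMparam n),
    boxD x.1 y.1 < ε → ∃ σ : Equiv.Perm (Fin n), dist (pact σ y.1) x.1 < δ := by
  classical
  obtain ⟨ε, hε, hεδ, hε1, hε2⟩ : ∃ ε : ℝ, 0 < ε ∧ ε < δ ∧ (∀ i, ε < x.1.2 i) ∧ ∀ e, ε < x.1.1 e := by
    have gen : ∀ b : ℝ, 0 < b → ∀ᶠ η : ℝ in nhdsWithin 0 (Set.Ioi 0), η < b := by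
      intro b hb
      exact Filter.Eventually.filter_mono nhdsWithin_le_nhds (gt_mem_nhds hb)
    have e1 : ∀ᶠ η : ℝ in nhdsWithin 0 (Set.Ioi 0), 0 < η := eventually_mem_nhdsWithin
    have e2 : ∀ᶠ η : ℝ in nhdsWithin 0 (Set.Ioi 0), ∀ i, η < x.1.2 i := by
      rw [Filter.eventually_all]; exact fun i => gen _ (x.2.2.1 i)
    have e3 : ∀ᶠ η : ℝ in nhdsWithin 0 (Set.Ioi 0), ∀ i, η < x.1.1 i := by
      rw [Filter.eventually_all]; exact fun i => gen _ (x.2.1.1 i)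
    obtain ⟨η, h⟩ := (e1.and ((gen δ hδ).and (e2.and e3))).exists
    exact ⟨η, h⟩
  refine ⟨ε, hε, fun y hy => ?_⟩
  rw [boxD_lt x.2 y.2 hε] at hy
  obtain ⟨w, hw, h1, h2, S, hS, hd⟩ := hy
  have htot : ∑ p, w p = 1 := by
    rw [Fintype.sum_prod_type]; simp only [h1]; exact x.2.2.2
  have hcompl : ∑ p ∈ Sᶜ, w p < ε := by
    have := Finset.sum_add_sum_compl S w
    linarith
  -- every row meets S
  have hrow : ∀ i, ∃ j, (i, j) ∈ S := by
    intro i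
    by_contra h
    push Not at h
    have : x.1.2 i ≤ ∑ p ∈ Sᶜ, w p := by
      rw [← h1 i]
      refine le_trans (Finset.sum_map Finset.univ (⟨fun j => (i, j), fun a b hab => by simpa using hab⟩ : Fin n ↪ Fin n × Fin n) w).ge ?_
      apply Finset.sum_le_sum_of_subset_of_nonneg
      · intro p hp
        simp only [Finset.mem_map, Finset.mem_univ, true_and, Function.Embedding.coeFn_mk] at hp
        obtain ⟨j, rfl⟩ := hp
        rw [Finset.mem_compl]; exact h j
      · intro p _ _; exact hw p
    linarith [hε1 i]
  choose f hf using hrow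
  have hSinj : ∀ i i' j, (i, j) ∈ S → (i', j) ∈ S → i = i' := by
    intro i i' j hi hi'
    by_contra hne
    have h3 := hd _ hi _ hi'
    simp only [drDist, hne, dif_neg, not_false_iff, dif_pos, sub_zero] at h3
    have := hε2 (pairOf i i' hne)
    have := le_abs_self (x.1.1 (pairOf i i' hne))
    linarith
  have hfinj : Function.Injective f := fun i i' h => hSinj i i' (f i) (hf i) (h ▸ hf i')
  let σ : Equiv.Perm (Fin n) := Equiv.ofBijective f (Finite.injective_iff_bijective.mp hfinj)
  have hσ : ∀ i, σ i = f i := fun i => rfl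
  have hSgraph : ∀ i j, (i, j) ∈ S ↔ j = σ i := by
    intro i j
    constructor
    · intro h
      have h3 := hf (σ.symm j)
      rw [← hσ, Equiv.apply_symm_apply] at h3
      have := hSinj _ _ _ h h3
      rw [this]; simp
    · rintro rfl; exact hf i
  have hlt1 : ∀ i, |y.1.2 (σ i) - x.1.2 i| < ε := by
    intro i
    have a1 : x.1.2 i = w (i, σ i) + ∑ j ∈ Finset.univ.erase (σ i), w (i, j) := by
      rw [← h1 i, Finset.add_sum_erase _ (fun j => w (i, j)) (Finset.mem_univ _)]
    have a2 : y.1.2 (σ i) = w (i, σ i) + ∑ i' ∈ Finset.univ.erase i, w (i', σ i) := by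
      rw [← h2 (σ i), Finset.add_sum_erase _ (fun i' => w (i', σ i)) (Finset.mem_univ _)]
    have b1 : ∑ j ∈ Finset.univ.erase (σ i), w (i, j) ≤ ∑ p ∈ Sᶜ, w p := by
      refine le_trans (Finset.sum_map (Finset.univ.erase (σ i)) (⟨fun j => (i, j), fun a b hab => by simpa using hab⟩ : Fin n ↪ Fin n × Fin n) w).ge ?_
      apply Finset.sum_le_sum_of_subset_of_nonneg
      · intro p hp
        simp only [Finset.mem_map, Finset.mem_erase, Finset.mem_univ, and_true, Function.Embedding.coeFn_mk] at hp
        obtain ⟨j, hj, rfl⟩ := hp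
        rw [Finset.mem_compl, hSgraph]; exact hj
      · intro p _ _; exact hw p
    have b2 : ∑ i' ∈ Finset.univ.erase i, w (i', σ i) ≤ ∑ p ∈ Sᶜ, w p := by
      refine le_trans (Finset.sum_map (Finset.univ.erase i) (⟨fun i' => (i', σ i), fun a b hab => by simpa using hab⟩ : Fin n ↪ Fin n × Fin n) w).ge ?_
      apply Finset.sum_le_sum_of_subset_of_nonneg
      · intro p hp
        simp only [Finset.mem_map, Finset.mem_erase, Finset.mem_univ, and_true, Function.Embedding.coeFn_mk] at hp
        obtain ⟨j, hj, rfl⟩ := hp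
        rw [Finset.mem_compl, hSgraph]
        exact fun h => hj (σ.injective h).symm
      · intro p _ _; exact hw p
    have c1 : 0 ≤ ∑ j ∈ Finset.univ.erase (σ i), w (i, j) := Finset.sum_nonneg fun j _ => hw _
    have c2 : 0 ≤ ∑ i' ∈ Finset.univ.erase i, w (i', σ i) := Finset.sum_nonneg fun j _ => hw _
    rw [abs_lt]
    constructor <;> linarith
  refine ⟨σ, ?_⟩
  rw [Prod.dist_eq, max_lt_iff, dist_pi_lt_iff hδ, dist_pi_lt_iff hδ]
  constructor
  · intro e
    obtain ⟨e, he⟩ := e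
    obtain ⟨i, j, hij, rfl⟩ := Finset.card_eq_two.mp he
    have h3 := hd _ ((hSgraph i _).mpr rfl) _ ((hSgraph j _).mpr rfl)
    simp only at h3
    rw [← drDist_pact] at h3
    simp only [drDist, hij, dif_neg, not_false_iff] at h3
    rw [Real.dist_eq, abs_sub_comm]
    exact lt_trans h3 hεδ
  · intro i
    rw [Real.dist_eq]
    exact (hlt1 i).trans hεδ

theorem boxTop_open_iff {n : ℕ} (u : Set ↥(MMparam n)) : @IsOpen _ (boxTop n) u ↔
    IsOpen u ∧ ∀ (σ : Equiv.Perm (Fin n)) (x : ↥(MMparam n)), x ∈ u → (⟨pact σ x.1, pact_mem σ x.2⟩ : ↥(MMparam n)) ∈ u := by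
  constructor
  · intro h
    induction h with
    | basic s hs =>
      obtain ⟨x, ε, hε, rfl⟩ := hs
      refine ⟨boxball_open x ε hε, fun σ y hy => ?_⟩
      exact boxD_pact x.2 y.2 σ hε hy
    | univ => exact ⟨isOpen_univ, fun _ _ _ => trivial⟩
    | inter s t _ _ hs ht =>
      exact ⟨hs.1.inter ht.1, fun σ x hx => ⟨hs.2 σ x hx.1, ht.2 σ x hx.2⟩⟩
    | sUnion S _ h =>
      refine ⟨isOpen_sUnion fun t ht => (h t ht).1, ?_⟩
      rintro σ x ⟨t, ht, hx⟩
      exact ⟨t, ht, (h t ht).2 σ x hx⟩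
  · rintro ⟨ho, hi⟩
    let _ := boxTop n
    rw [isOpen_iff_forall_mem_open]
    intro x hx
    obtain ⟨δ, hδ, hball⟩ := Metric.isOpen_iff.mp ho x hx
    obtain ⟨ε, hε, hy⟩ := boxD_perm x hδ
    refine ⟨{y | boxD x.1 y.1 < ε}, ?_, ?_, ?_⟩
    · intro y hyε
      obtain ⟨σ, hσ⟩ := hy y hyε
      have h1 : (⟨pact σ y.1, pact_mem σ y.2⟩ : ↥(MMparam n)) ∈ u := hball hσ
      have h2 := hi σ⁻¹ _ h1
      convert h2 using 1
      apply Subtype.ext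
      ext a
      · simp only [pact]
        refine congrArg y.1.1 ?_
        rw [← Equiv.Perm.mul_apply, ← pairPerm_mul, mul_inv_cancel, pairPerm_one]; rfl
      · simp [pact]
    · exact TopologicalSpace.isOpen_generateFrom_of_mem ⟨x, ε, hε, rfl⟩
    · exact boxD_self x.2 hε
end boxchar

/-- vertices of a Kuhn simplex -/
def kvtx {N : ℕ} (x : Fin N → ℕ) (τ : Equiv.Perm (Fin N)) (k : ℕ) : Fin N → ℕ :=
  fun j => x j + if (τ j : ℕ) < k then 1 else 0

/-- facet cochain -/
def kcoch {N : ℕ} (L : (Fin N → ℕ) → Fin (N + 1)) (w : Fin N → Fin N → ℕ) : ZMod 2 :=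
  Matrix.det (fun k a : Fin N => if L (w a) = k.succ then (1 : ZMod 2) else 0)

theorem kcoch_zero {N : ℕ} (L : (Fin N → ℕ) → Fin (N + 1)) (w : Fin N → Fin N → ℕ) (k : Fin N)
    (h : ∀ a, L (w a) ≠ k.succ) : kcoch L w = 0 := by
  apply Matrix.det_eq_zero_of_row_eq_zero k
  intro a; simp [h a]

theorem kcoch_sum {N : ℕ} (L : (Fin N → ℕ) → Fin (N + 1)) (v : Fin (N + 1) → Fin N → ℕ) :
    ∑ i : Fin (N + 1), kcoch L (fun a => v (i.succAbove a)) =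
      Matrix.det (fun k i : Fin (N + 1) => if L (v i) = k then (1 : ZMod 2) else 0) := by
  set M : Matrix (Fin (N + 1)) (Fin (N + 1)) (ZMod 2) :=
    fun k i : Fin (N + 1) => if L (v i) = k then (1 : ZMod 2) else 0 with hM
  have h1 : M.det = (M.updateRow 0 (∑ k, (1 : ZMod 2) • M k)).det := by
    rw [Matrix.det_updateRow_sum]; simp
  have h2 : (∑ k, (1 : ZMod 2) • M k) = fun _ => 1 := by
    funext i
    simp [hM]
  rw [h1, h2, Matrix.det_succ_row_zero]
  refine Finset.sum_congr rfl fun i _ => ?_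
  have h3 : (-1 : ZMod 2) = 1 := by decide
  rw [h3]
  simp only [one_pow, one_mul, Matrix.updateRow_self]
  unfold kcoch
  congr 1

theorem kcoch_inner {N : ℕ} (L : (Fin N → ℕ) → Fin (N + 1)) (x : Fin N → ℕ) (i : Fin (N + 1))
    (h0 : i ≠ 0) (h1 : i ≠ Fin.last N) :
    ∑ τ : Equiv.Perm (Fin N), kcoch L (fun a => kvtx x τ (i.succAbove a)) = 0 := by
  have hi0 : (i : ℕ) ≠ 0 := fun h => h0 (Fin.ext h)
  have hi1 : (i : ℕ) ≠ N := fun h => h1 (Fin.ext h)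
  have hi2 := i.isLt
  let p : Fin N := ⟨i - 1, by omega⟩
  let q : Fin N := ⟨i, by omega⟩
  have hpq : p ≠ q := by
    intro h; have := congrArg Fin.val h; simp [p, q] at this; omega
  have key : ∀ τ : Equiv.Perm (Fin N), kcoch L (fun a => kvtx x (Equiv.swap p q * τ) (i.succAbove a))
      = kcoch L (fun a => kvtx x τ (i.succAbove a)) := by
    intro τ
    congr 1
    funext a j
    have hne : ((i.succAbove a : Fin (N+1)) : ℕ) ≠ i := fun h => Fin.succAbove_ne i a (Fin.ext h)
    unfold kvtx
    have : ((((Equiv.swap p q * τ) j : Fin N) : ℕ) < (i.succAbove a : Fin (N+1))) ↔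
        ((τ j : ℕ) < (i.succAbove a : Fin (N+1))) := by
      rw [Equiv.Perm.mul_apply]
      by_cases hp : τ j = p
      · rw [hp, Equiv.swap_apply_left]; simp only [p, q]; omega
      · by_cases hq : τ j = q
        · rw [hq, Equiv.swap_apply_right]; simp only [p, q]; omega
        · rw [Equiv.swap_apply_of_ne_of_ne hp hq]
    simp only [this]
  apply Finset.sum_involution (fun τ _ => Equiv.swap p q * τ)
  · intro τ _; rw [key]; exact CharTwo.add_self_eq_zero _
  · intro τ _ _ h
    have : Equiv.swap p q = 1 := by simpa using h
    exact hpq (Equiv.swap_eq_one_iff.mp this)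
  · intro τ _; simp
  · intro τ _; simp [← mul_assoc]

/-- The cyclic shift permutation. -/
def kcyc (n : ℕ) : Equiv.Perm (Fin (n + 1)) := finRotate (n + 1)

theorem kcyc_lt (n : ℕ) (a : Fin (n+1)) (h : (a:ℕ) < n) : ((kcyc n a : Fin (n+1)) : ℕ) = a + 1 := by
  unfold kcyc
  rw [coe_finRotate_of_ne_last]
  intro h'; rw [h'] at h; simp at h

theorem kcyc_last (n : ℕ) : kcyc n (Fin.last n) = 0 := by
  unfold kcyc; simp

theorem kvtx_shift {n : ℕ} (x : Fin (n+1) → ℕ) (τ : Equiv.Perm (Fin (n+1))) (a : ℕ) (ha : a ≤ n) :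
    kvtx (Function.update x (τ.symm (Fin.last n)) (x (τ.symm (Fin.last n)) + 1)) τ a
     = kvtx x (kcyc n * τ) (a + 1) := by
  funext j
  unfold kvtx
  rw [Equiv.Perm.mul_apply]
  by_cases hj : τ j = Fin.last n
  · have : j = τ.symm (Fin.last n) := by rw [← hj]; simp
    subst this
    simp [kcyc_last]; omega
  · have hj' : j ≠ τ.symm (Fin.last n) := by rintro rfl; simp at hj
    rw [Function.update_of_ne hj']
    have : (τ j : ℕ) < n := by
      have := (τ j).isLt
      have h2 : (τ j : ℕ) ≠ n := fun h => hj (Fin.ext h)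
      omega
    rw [kcyc_lt n _ this]
    simp

theorem ksperner_pos (n m : ℕ) (L : (Fin (n+1) → ℕ) → Fin (n + 2))
    (h0 : ∀ x : Fin (n+1) → ℕ, ∀ k, x k = 0 → L x ≠ k.succ)
    (h1 : ∀ x : Fin (n+1) → ℕ, (∀ j, x j ≤ m + 1) → ∀ k, (x k = m + 1 → (∀ j, k < j → x j ≠ m + 1) → L x = k.succ)) :
    ∃ x : Fin (n+1) → ℕ, ∃ τ : Equiv.Perm (Fin (n+1)), (∀ j, x j ≤ m) ∧
      ∀ k, ∃ i : Fin (n + 2), L (kvtx x τ i) = k := by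
  classical
  set s : Finset ((Fin (n+1) → ℕ) × Equiv.Perm (Fin (n+1))) :=
    (Fintype.piFinset fun _ => Finset.range (m+1)) ×ˢ Finset.univ with hs
  have mem_s : ∀ p, p ∈ s ↔ ∀ j, p.1 j ≤ m := by
    intro p; simp [hs, Fintype.mem_piFinset]
  set C : Fin (n+2) → (Fin (n+1) → ℕ) × Equiv.Perm (Fin (n+1)) → ZMod 2 :=
    fun i p => kcoch L (fun a => kvtx p.1 p.2 (i.succAbove a)) with hC
  -- inner facets
  have hin : ∀ i, i ≠ 0 → i ≠ Fin.last (n+1) → ∑ p ∈ s, C i p = 0 := by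
    intro i hi hi'
    rw [hs, Finset.sum_product]
    exact Finset.sum_eq_zero fun x _ => kcoch_inner L x i hi hi'
  -- last facets with boundary
  have hC0 : ∀ p, C 0 p = kcoch L (fun a => kvtx p.1 p.2 (a + 1)) := by
    intro p; simp [hC]
  have hCl : ∀ p, C (Fin.last (n+1)) p = kcoch L (fun a => kvtx p.1 p.2 a) := by
    intro p; simp [hC]
  have e1 : ∑ p ∈ s, C (Fin.last (n+1)) p =
      ∑ p ∈ s with p.1 (p.2.symm (Fin.last n)) ≠ 0, C (Fin.last (n+1)) p := by
    rw [Finset.sum_filter_of_ne]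
    intro p hp hne h
    apply hne
    rw [hCl]
    apply kcoch_zero L _ (p.2.symm (Fin.last n))
    intro a
    apply h0
    have := a.isLt
    simp [kvtx, h]; omega
  have e2 : ∑ p ∈ s with p.1 (p.2.symm (Fin.last n)) ≠ 0, C (Fin.last (n+1)) p =
      ∑ p ∈ s with p.1 (p.2.symm 0) ≠ m, C 0 p := by
    symm
    have hk0 : ∀ τ : Equiv.Perm (Fin (n+1)), ((kcyc n)⁻¹ * τ).symm (Fin.last n) = τ.symm 0 := by
      intro τ; rw [Equiv.symm_apply_eq, Equiv.Perm.mul_apply, Equiv.apply_symm_apply,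
        ← kcyc_last n]; simp
    have hk1 : ∀ τ : Equiv.Perm (Fin (n+1)), (kcyc n * τ).symm 0 = τ.symm (Fin.last n) := by
      intro τ; rw [Equiv.symm_apply_eq, Equiv.Perm.mul_apply, Equiv.apply_symm_apply, kcyc_last]
    refine Finset.sum_nbij' (fun p => (Function.update p.1 (p.2.symm 0) (p.1 (p.2.symm 0) + 1), (kcyc n)⁻¹ * p.2))
      (fun p => (Function.update p.1 (p.2.symm (Fin.last n)) (p.1 (p.2.symm (Fin.last n)) - 1), kcyc n * p.2))
      ?_ ?_ ?_ ?_ ?_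
    · intro p hp
      simp only [Finset.mem_filter, mem_s] at hp ⊢
      rw [hk0]
      refine ⟨fun j => ?_, by simp⟩
      by_cases hj : j = p.2.symm 0
      · subst hj; simp; have := hp.1 (p.2.symm 0); have := hp.2; omega
      · rw [Function.update_of_ne hj]; exact hp.1 j
    · intro p hp
      simp only [Finset.mem_filter, mem_s] at hp ⊢
      rw [hk1]
      have h3 := hp.1 (p.2.symm (Fin.last n))
      refine ⟨fun j => ?_, by simp; have := hp.2; omega⟩
      by_cases hj : j = p.2.symm (Fin.last n)
      · subst hj; simp; omega
      · rw [Function.update_of_ne hj]; exact hp.1 j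
    · intro p hp
      simp only [Finset.mem_filter, mem_s] at hp
      ext1
      · simp [hk0]
      · simp
    · intro p hp
      simp only [Finset.mem_filter, mem_s] at hp
      have := hp.2
      ext1
      · simp only [hk1, Function.update_self, Function.update_idem]
        rw [Nat.sub_add_cancel (by omega)]; simp
      · simp
    · intro p hp
      rw [hC0, hCl]
      congr 1
      funext a
      have := kvtx_shift p.1 ((kcyc n)⁻¹ * p.2) a (by have := a.isLt; omega)
      rw [hk0] at this
      simp only [this]
      simp
  have e3 : ∑ p ∈ s with ¬ (p.1 (p.2.symm 0) ≠ m), C 0 p = 1 := by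
    rw [Finset.sum_eq_single ((fun _ => m, 1) : (Fin (n+1) → ℕ) × Equiv.Perm (Fin (n+1)))]
    · rw [hC0]
      have : ∀ a : Fin (n+1), L (kvtx (fun _ => m) 1 ((a:ℕ) + 1)) = a.succ := by
        intro a
        apply h1
        · intro j; simp [kvtx]; split_ifs <;> omega
        · simp [kvtx]
        · intro j hj; simp [kvtx]; omega
      unfold kcoch
      simp only [this]
      have : (fun k a : Fin (n+1) => if a.succ = k.succ then (1:ZMod 2) else 0) = (1 : Matrix (Fin (n+1)) (Fin (n+1)) (ZMod 2)) := by
        ext k a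
        simp [Matrix.one_apply, eq_comm]
      rw [this]; simp
    · intro p hp hne
      simp only [Finset.mem_filter, mem_s, not_not] at hp
      by_contra hc
      apply hne
      rw [hC0] at hc
      -- top index labelled
      set v : Fin (n+1) → Fin (n+1) → ℕ := fun a => kvtx p.1 p.2 (a+1) with hv
      have hle : ∀ a j, v a j ≤ m + 1 := by
        intro a j; have := hp.1 j; simp only [hv, kvtx]; split_ifs <;> omega
      have hmono : ∀ a b j, a ≤ b → v a j = m + 1 → v b j = m+1 := by
        intro a b j hab h
        have h2 := hle b j
        have h3 : v a j ≤ v b j := by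
          have : (a:ℕ) ≤ b := hab
          simp only [hv, kvtx]; split_ifs <;> omega
        omega
      have hex : ∀ a, v a (p.2.symm 0) = m + 1 := by
        intro a; simp [hv, kvtx, hp.2]
      have hlab : ∀ a, ∃ k, v a k = m + 1 ∧ (∀ j, k < j → v a j ≠ m + 1) := by
        intro a
        have hne : (Finset.univ.filter fun j => v a j = m+1).Nonempty := ⟨p.2.symm 0, by simp [hex a]⟩
        refine ⟨Finset.max' _ hne, ?_, ?_⟩
        · have := Finset.max'_mem _ hne
          exact (Finset.mem_filter.mp this).2
        · intro j hj h
          have := Finset.le_max' (Finset.univ.filter fun j => v a j = m+1) j (by simp [h])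
          exact absurd hj (not_lt.mpr this)
      choose lab hlab1 hlab2 using hlab
      have hL : ∀ a, L (v a) = (lab a).succ := fun a => h1 _ (hle a) _ (hlab1 a) (hlab2 a)
      have hsurj : Function.Surjective lab := by
        intro k
        by_contra hk
        push Not at hk
        apply hc
        apply kcoch_zero L _ k
        intro a h
        have := hL a
        simp only [hv] at this
        rw [this] at h
        exact hk a (Fin.succ_injective _ h)
      have hbij : Function.Bijective lab := (Finite.injective_iff_bijective).mp (Finite.injective_iff_surjective.mpr hsurj)
      have hm : Monotone lab := by
        intro a b hab
        by_contra hlt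
        push Not at hlt
        exact hlab2 b _ hlt (hmono a b _ hab (hlab1 a))
      have hsm : StrictMono lab := hm.strictMono_of_injective hbij.1
      have hid : ∀ a, lab a = a := by
        intro a
        have h1 : a ≤ lab a := hsm.le_apply
        have h2 : lab a ≤ a := hsm.apply_le
        exact le_antisymm h2 h1
      have ha : ∀ j, p.1 j = m ∧ (p.2 j : ℕ) ≤ j := by
        intro j
        have h1 := hlab1 j
        rw [hid] at h1
        have h2 := hp.1 j
        simp only [hv, kvtx] at h1
        split_ifs at h1 <;> omega
      have hb : ∀ j : Fin (n+1), (j : ℕ) ≤ p.2 j := by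
        intro j
        by_cases hj : (j:ℕ) = 0
        · omega
        · have hjl := j.isLt
          have h3 := hlab2 ⟨j - 1, by omega⟩ j (by rw [hid, Fin.lt_def]; change (j:ℕ) - 1 < j; omega)
          simp only [hv, kvtx, (ha j).1] at h3
          by_contra hlt
          apply h3
          rw [if_pos (by omega)]
      ext1
      · funext j; exact (ha j).1
      · ext j; exact le_antisymm (ha j).2 (hb j)
    · intro h
      exfalso; apply h
      simp [mem_s]
  have htot : ∑ p ∈ s, ∑ i, C i p = 1 := by
    rw [Finset.sum_comm, Fin.sum_univ_succ, Fin.sum_univ_castSucc]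
    rw [Finset.sum_eq_zero (s := (Finset.univ : Finset (Fin n)))]
    · rw [← Finset.sum_filter_add_sum_filter_not s (fun p => p.1 (p.2.symm 0) ≠ m) (C 0), e3]
      rw [Fin.succ_last, e1, e2, zero_add, add_right_comm, CharTwo.add_self_eq_zero, zero_add]
    · intro i _
      apply hin
      · exact Fin.succ_ne_zero _
      · intro h
        have := congrArg Fin.val h
        simp at this
        have := i.isLt
        omega
  have hne : ∑ p ∈ s, ∑ i, C i p ≠ 0 := by rw [htot]; decide
  obtain ⟨p, hp, hpne⟩ := Finset.exists_ne_zero_of_sum_ne_zero hne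
  refine ⟨p.1, p.2, (mem_s p).mp hp, ?_⟩
  intro k
  by_contra hk
  push Not at hk
  apply hpne
  have := kcoch_sum L (fun i : Fin (n+2) => kvtx p.1 p.2 i)
  simp only [hC]
  rw [this]
  apply Matrix.det_eq_zero_of_row_eq_zero k
  intro i; simp [hk i]

theorem ksperner (N m : ℕ) (l : (Fin N → ℕ) → Fin (N + 1))
    (h0 : ∀ x : Fin N → ℕ, (∀ j, x j ≤ m) → ∀ k, x k = 0 → l x ≠ k.succ)
    (h1 : ∀ x : Fin N → ℕ, (∀ j, x j ≤ m) → ∀ k, x k = m → l x ≠ 0) :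
    ∃ x : Fin N → ℕ, ∃ v : Fin (N + 1) → Fin N → ℕ, (∀ i j, v i j ≤ m) ∧
      (∀ i j, x j ≤ v i j ∧ v i j ≤ x j + 1) ∧ ∀ k, ∃ i, l (v i) = k := by
  classical
  rcases N with _ | n
  · refine ⟨0, 0, fun i j => j.elim0, fun i j => j.elim0, fun k => ⟨0, Fin.ext (by omega)⟩⟩
  · have hmax : ∀ x : Fin (n+1) → ℕ, (¬ ∀ j, x j ≤ m) → ∃ k, m + 1 ≤ x k ∧ ∀ j, k < j → ¬ (m + 1 ≤ x j) := by
      intro x hx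
      push Not at hx
      obtain ⟨j0, hj0⟩ := hx
      have hne : (Finset.univ.filter fun j => m+1 ≤ x j).Nonempty := ⟨j0, by simp; omega⟩
      refine ⟨Finset.max' _ hne, (Finset.mem_filter.mp (Finset.max'_mem _ hne)).2, ?_⟩
      intro j hj h
      have := Finset.le_max' (Finset.univ.filter fun j => m+1 ≤ x j) j (by simp; omega)
      exact absurd hj (not_lt.mpr this)
    choose! top ht1 ht2 using hmax
    obtain ⟨x, τ, hx, hr⟩ := ksperner_pos n m (fun x => if ∀ j, x j ≤ m then l x else (top x).succ)
      (by
        intro x k hk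
        by_cases h : ∀ j, x j ≤ m
        · simp only [h, implies_true, if_true]; exact h0 x h k hk
        · simp only [h, if_false]
          intro h'
          have := ht1 x h
          rw [Fin.succ_injective _ h'] at this
          omega)
      (by
        intro x hx k hk hkj
        have h : ¬ ∀ j, x j ≤ m := by
          intro h; have := h k; omega
        simp only [h, if_false]
        have h3 := ht1 x h
        have h4 := ht2 x h
        congr 1
        rcases lt_trichotomy (top x) k with h5 | h5 | h5
        · exact absurd (by omega) (h4 k h5)
        · exact h5
        · have := hx (top x)
          exact absurd (by omega) (hkj _ h5))
    obtain ⟨i0, hi0⟩ := hr 0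
    have hle : ∀ j, kvtx x τ i0 j ≤ m := by
      by_contra h
      simp only [h, if_false] at hi0
      exact Fin.succ_ne_zero _ hi0
    simp only [hle, implies_true, if_true] at hi0
    have hlt : ∀ j, x j + 1 ≤ m := by
      intro j
      have h2 := h1 _ hle j
      have h3 := hle j
      have : kvtx x τ i0 j ≠ m := fun h => h2 h hi0
      have : x j ≤ kvtx x τ i0 j := by unfold kvtx; omega
      omega
    have hall : ∀ i : Fin (n+2), ∀ j, kvtx x τ i j ≤ m := by
      intro i j
      have := hlt j
      unfold kvtx; split_ifs <;> omega
    refine ⟨x, fun i => kvtx x τ i, hall, ?_, ?_⟩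
    · intro i j
      simp only [kvtx]; split_ifs <;> omega
    · intro k
      obtain ⟨i, hi⟩ := hr k
      refine ⟨i, ?_⟩
      simpa [hall i] using hi

/-- KKM-type theorem on the cube. -/
theorem kkm_cube (N : ℕ) (W : Fin (N + 1) → Set (Set.Icc (0 : Fin N → ℝ) 1))
    (ho : ∀ k, IsOpen (W k)) (hc : ∀ x, ∃ k, x ∈ W k)
    (h0 : ∀ k : Fin N, ∀ x, x.1 k = 0 → x ∉ W k.succ)
    (h1 : ∀ k : Fin N, ∀ x, x.1 k = 1 → x ∉ W 0) : ∃ x, ∀ k, x ∈ W k := by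
  classical
  obtain ⟨δ, hδ, hleb⟩ := lebesgue_number_lemma_of_metric (s := (Set.univ : Set (Set.Icc (0 : Fin N → ℝ) 1)))
    isCompact_univ ho (fun x _ => by simpa using hc x)
  obtain ⟨m, hm⟩ := exists_nat_one_div_lt hδ
  set M : ℕ := m + 1 with hM
  have hMpos : (0:ℝ) < M := by positivity
  have hpt : ∀ y : Fin N → ℕ, (fun j => min ((y j : ℝ) / M) 1) ∈ Set.Icc (0 : Fin N → ℝ) 1 := by
    intro y
    constructor
    · intro j; simp; positivity
    · intro j; simp
  let pt : (Fin N → ℕ) → Set.Icc (0 : Fin N → ℝ) 1 := fun y => ⟨_, hpt y⟩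
  have hlab : ∀ y, ∃ k, Metric.ball (pt y) δ ⊆ W k := fun y => hleb _ (Set.mem_univ _)
  choose l hl using hlab
  have hself : ∀ y, pt y ∈ W (l y) := fun y => hl y (Metric.mem_ball_self hδ)
  obtain ⟨x, v, hv, hxv, hr⟩ := ksperner N M l
    (by
      intro y _ k hk h
      have h2 := hself y
      rw [h] at h2
      exact h0 k _ (by simp [pt, hk]) h2)
    (by
      intro y _ k hk h
      have h2 := hself y
      rw [h] at h2
      exact h1 k _ (by simp [pt, hk, hMpos.ne']) h2)
  refine ⟨pt (v 0), fun k => ?_⟩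
  obtain ⟨i, hi⟩ := hr k
  rw [← hi]
  apply hl
  rw [Metric.mem_ball, Subtype.dist_eq]
  refine lt_of_le_of_lt ?_ hm
  rw [dist_pi_le_iff (by positivity)]
  intro j
  have e : ∀ i, (pt (v i)).1 j = (v i j : ℝ) / M := by
    intro i
    simp only [pt]
    rw [min_eq_left]
    rw [div_le_one hMpos]; exact_mod_cast hv i j
  rw [e, e, Real.dist_eq, ← sub_div, abs_div, abs_of_pos hMpos]
  have : ((M:ℕ):ℝ) = (m:ℝ)+1 := by simp [hM]
  rw [this]
  gcongr
  rw [abs_le]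
  have a1 := hxv 0 j
  have a2 := hxv i j
  constructor
  · have : (v i j : ℝ) ≤ v 0 j + 1 := by exact_mod_cast (by omega : v i j ≤ v 0 j + 1)
    linarith
  · have : (v 0 j : ℝ) ≤ v i j + 1 := by exact_mod_cast (by omega : v 0 j ≤ v i j + 1)
    linarith


section upper
open Topology
set_option linter.unusedSectionVars false
variable {I : Type} [Fintype I] {Γ : Type} [Group Γ] [Finite Γ] {X : Set (I → ℝ)}

/-- permuting the coordinates -/
def cact (φ : Γ →* Equiv.Perm I) (hX : ∀ g, ∀ x ∈ X, (fun i => x (φ g i)) ∈ X) (g : Γ) (x : X) : X :=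
  ⟨fun i => x.1 (φ g i), hX g x.1 x.2⟩

theorem cact_continuous (φ : Γ →* Equiv.Perm I) (hX : ∀ g, ∀ x ∈ X, (fun i => x (φ g i)) ∈ X) (g : Γ) :
    Continuous (cact φ hX g) := by
  unfold cact
  refine Continuous.subtype_mk (continuous_pi fun i => ?_) _
  exact (continuous_apply (φ g i)).comp (continuous_subtype_val : Continuous (Subtype.val : X → I → ℝ))

theorem cact_mul (φ : Γ →* Equiv.Perm I) (hX : ∀ g, ∀ x ∈ X, (fun i => x (φ g i)) ∈ X) (g h : Γ) (x : X) :
    cact φ hX g (cact φ hX h x) = cact φ hX (h * g) x := by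
  apply Subtype.ext; funext i
  simp [cact]

theorem cact_one (φ : Γ →* Equiv.Perm I) (hX : ∀ g, ∀ x ∈ X, (fun i => x (φ g i)) ∈ X) (x : X) :
    cact φ hX 1 x = x := by
  apply Subtype.ext; funext i
  simp [cact]

theorem cact_edist (φ : Γ →* Equiv.Perm I) (hX : ∀ g, ∀ x ∈ X, (fun i => x (φ g i)) ∈ X) (g : Γ) (x y : X) :
    edist (cact φ hX g x) (cact φ hX g y) ≤ edist x y := by
  rw [Subtype.edist_eq, Subtype.edist_eq, edist_pi_le_iff]
  intro i
  exact edist_le_pi_edist x.1 y.1 (φ g i)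

/-- box -/
def cbox (X : Set (I → ℝ)) (q : (I → ℝ) × (I → ℝ)) : Set X := {y | ∀ i, q.1 i ≤ y.1 i ∧ y.1 i ≤ q.2 i}

theorem exists_boxes (φ : Γ →* Equiv.Perm I) (hX : ∀ g, ∀ x ∈ X, (fun i => x (φ g i)) ∈ X)
    [LocallyCompactSpace X] (A : Set ℝ) (hA : Dense A)
    (U : Set (Set X)) (hUo : ∀ u ∈ U, IsOpen u) (hUc : ⋃₀ U = Set.univ)
    (hUi : ∀ u ∈ U, ∀ g x, x ∈ u → cact φ hX g x ∈ u) :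
    ∃ Q : Set ((I → ℝ) × (I → ℝ)), (∀ q ∈ Q, ∀ g, ((fun i => q.1 (φ g i), fun i => q.2 (φ g i)) : (I → ℝ) × (I → ℝ)) ∈ Q) ∧
      (∀ q ∈ Q, ∀ i, q.1 i ∈ A ∧ q.2 i ∈ A) ∧ (∀ x : X, ∃ q ∈ Q, x ∈ cbox X q) ∧
      (∀ q ∈ Q, ∃ u ∈ U, cbox X q ⊆ u) ∧
      (∀ x : X, ∃ O ∈ 𝓝 x, {q ∈ Q | (cbox X q ∩ O).Nonempty}.Finite) := by
  classical
  have hB : ∀ x : X, (𝓝 x).HasBasis (fun q : (I → ℝ) × (I → ℝ) =>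
      (∀ i, q.1 i ∈ A ∧ q.2 i ∈ A ∧ q.1 i < x.1 i ∧ x.1 i < q.2 i) ∧ ∃ u ∈ U, cbox X q ⊆ u) (fun q => cbox X q) := by
    intro x
    refine ⟨fun t => ⟨fun ht => ?_, ?_⟩⟩
    · obtain ⟨u, hu, hxu⟩ : x ∈ ⋃₀ U := by rw [hUc]; trivial
      have h1 : t ∩ u ∈ 𝓝 x := Filter.inter_mem ht ((hUo u hu).mem_nhds hxu)
      obtain ⟨ε, hε, hball⟩ := Metric.mem_nhds_iff.mp h1
      have ha : ∀ i, ∃ a ∈ A, x.1 i - ε < a ∧ a < x.1 i := by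
        intro i
        obtain ⟨a, ha, hh⟩ := hA.exists_between (show x.1 i - ε < x.1 i by linarith)
        exact ⟨a, ha, hh⟩
      have hb : ∀ i, ∃ a ∈ A, x.1 i < a ∧ a < x.1 i + ε := by
        intro i
        obtain ⟨a, ha, hh⟩ := hA.exists_between (show x.1 i < x.1 i + ε by linarith)
        exact ⟨a, ha, hh⟩
      choose a haA ha1 ha2 using ha
      choose b hbA hb1 hb2 using hb
      have hsub : cbox X (a, b) ⊆ Metric.ball x ε := by
        intro y hy
        rw [Metric.mem_ball, Subtype.dist_eq, dist_pi_lt_iff hε]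
        intro i
        rw [Real.dist_eq, abs_lt]
        have := hy i
        have := ha1 i
        have := hb2 i
        simp only at *
        constructor <;> linarith
      exact ⟨(a, b), ⟨fun i => ⟨haA i, hbA i, ha2 i, hb1 i⟩, u, hu, fun y hy => (hball (hsub hy)).2⟩,
        fun y hy => (hball (hsub hy)).1⟩
    · rintro ⟨q, ⟨hq, -⟩, hqt⟩
      refine Filter.mem_of_superset ?_ hqt
      have h1 : ∀ᶠ y : X in 𝓝 x, ∀ i, q.1 i < y.1 i ∧ y.1 i < q.2 i := by
        rw [Filter.eventually_all]
        intro i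
        have hc : ContinuousAt (fun y : X => y.1 i) x :=
      ((continuous_apply i).comp continuous_subtype_val).continuousAt
        exact (hc.eventually (lt_mem_nhds (hq i).2.2.1)).and (hc.eventually (gt_mem_nhds (hq i).2.2.2))
      filter_upwards [h1] with y hy i
      exact ⟨(hy i).1.le, (hy i).2.le⟩
  obtain ⟨α, c, r, hp, hcov, hlf⟩ := refinement_of_locallyCompact_sigmaCompact_of_nhds_basis.{0} hB
  have hbox : ∀ (q : (I → ℝ) × (I → ℝ)) (g : Γ) (y : X),
      y ∈ cbox X ((fun i => q.1 (φ g i), fun i => q.2 (φ g i)) : (I → ℝ) × (I → ℝ)) ↔ cact φ hX g⁻¹ y ∈ cbox X q := by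
    intro q g y
    constructor
    · intro h i
      have := h (φ g⁻¹ i)
      simpa [cact] using this
    · intro h i
      have := h (φ g i)
      simpa [cact] using this
  refine ⟨Set.range fun p : Γ × α => ((fun i => (r p.2).1 (φ p.1 i), fun i => (r p.2).2 (φ p.1 i)) : (I → ℝ) × (I → ℝ)),
    ?_, ?_, ?_, ?_, ?_⟩
  · rintro _ ⟨⟨h, a⟩, rfl⟩ g
    exact ⟨(h * g, a), by simp⟩
  · rintro _ ⟨⟨h, a⟩, rfl⟩ i
    exact ⟨((hp a).1 _).1, ((hp a).1 _).2.1⟩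
  · intro x
    have : x ∈ ⋃ a, cbox X (r a) := by rw [hcov]; trivial
    obtain ⟨a, ha⟩ := Set.mem_iUnion.mp this
    refine ⟨_, ⟨(1, a), rfl⟩, ?_⟩
    simpa using ha
  · rintro _ ⟨⟨h, a⟩, rfl⟩
    obtain ⟨u, hu, hsub⟩ := (hp a).2
    refine ⟨u, hu, fun y hy => ?_⟩
    have h1 := hsub ((hbox _ _ _).mp hy)
    have h2 := hUi u hu h _ h1
    rw [cact_mul] at h2
    simpa [cact_one] using h2
  · intro x
    have hO : ∀ g : Γ, ∃ O ∈ 𝓝 (cact φ hX g⁻¹ x), {a | (cbox X (r a) ∩ O).Nonempty}.Finite := fun g => hlf _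
    choose O hO1 hO2 using hO
    refine ⟨⋂ g, (cact φ hX g⁻¹) ⁻¹' (O g), ?_, ?_⟩
    · rw [Filter.iInter_mem]
      exact fun g => (cact_continuous φ hX g⁻¹).continuousAt (hO1 g)
    · have hfin : (⋃ g, (fun a => ((g, a) : Γ × α)) '' {a | (cbox X (r a) ∩ O g).Nonempty}).Finite :=
        Set.finite_iUnion fun g => (hO2 g).image _
      refine (hfin.image (fun p : Γ × α => ((fun i => (r p.2).1 (φ p.1 i), fun i => (r p.2).2 (φ p.1 i)) : (I → ℝ) × (I → ℝ)))).subset ?_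
      rintro _ ⟨⟨⟨h, a⟩, rfl⟩, y, hy1, hy2⟩
      refine ⟨(h, a), ?_, rfl⟩
      refine Set.mem_iUnion.mpr ⟨h, a, ?_, rfl⟩
      exact ⟨cact φ hX h⁻¹ y, (hbox _ _ _).mp hy1, Set.mem_iInter.mp hy2 h⟩

/-- boxes containing a point -/
def ccubes (Q : Set ((I → ℝ) × (I → ℝ))) (x : X) : Set ((I → ℝ) × (I → ℝ)) := {q ∈ Q | x ∈ cbox X q}

/-- wall directions -/
def cwall (Q : Set ((I → ℝ) × (I → ℝ))) (x : X) : Set I :=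
  {i | ∃ q ∈ ccubes Q x, x.1 i = q.1 i ∨ x.1 i = q.2 i}

theorem cwall_local (Q : Set ((I → ℝ) × (I → ℝ)))
    (hlf : ∀ x : X, ∃ O ∈ 𝓝 x, {q ∈ Q | (cbox X q ∩ O).Nonempty}.Finite) (x : X) :
    ∀ᶠ y in 𝓝 x, (cwall Q y).ncard = (cwall Q x).ncard → ccubes Q y = ccubes Q x := by
  obtain ⟨O, hO, hfin⟩ := hlf x
  set F := {q ∈ Q | (cbox X q ∩ O).Nonempty} with hF
  have hgen : ∀ (i : I) (t : ℝ), ∀ᶠ y : X in 𝓝 x, (t < x.1 i → t < y.1 i) ∧ (x.1 i < t → y.1 i < t) := by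
    intro i t
    have hc : ContinuousAt (fun y : X => y.1 i) x :=
      ((continuous_apply i).comp continuous_subtype_val).continuousAt
    refine Filter.Eventually.and ?_ ?_
    · by_cases h : t < x.1 i
      · filter_upwards [hc.eventually (lt_mem_nhds h)] with y hy _ using hy
      · exact Filter.Eventually.of_forall fun y h' => absurd h' h
    · by_cases h : x.1 i < t
      · filter_upwards [hc.eventually (gt_mem_nhds h)] with y hy _ using hy
      · exact Filter.Eventually.of_forall fun y h' => absurd h' h
  have hev : ∀ᶠ y : X in 𝓝 x, ∀ q ∈ F, ∀ i, ((q.1 i < x.1 i → q.1 i < y.1 i) ∧ (x.1 i < q.1 i → y.1 i < q.1 i))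
      ∧ ((q.2 i < x.1 i → q.2 i < y.1 i) ∧ (x.1 i < q.2 i → y.1 i < q.2 i)) := by
    rw [hfin.eventually_all]
    intro q _
    rw [Filter.eventually_all]
    intro i
    exact (hgen i _).and (hgen i _)
  filter_upwards [hev, hO] with y hy hyO hcard
  have hsub : ccubes Q y ⊆ ccubes Q x := by
    rintro q ⟨hq, hqy⟩
    refine ⟨hq, fun i => ?_⟩
    have h1 := hy q ⟨hq, y, hqy, hyO⟩ i
    have h2 := hqy i
    constructor
    · by_contra h
      have := h1.1.2 (not_le.mp h)
      linarith
    · by_contra h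
      have := h1.2.1 (not_le.mp h)
      linarith
  have hyF : ∀ q ∈ ccubes Q y, q ∈ F := fun q hq => ⟨hq.1, y, hq.2, hyO⟩
  have hxF : ∀ q ∈ ccubes Q x, q ∈ F := fun q hq => ⟨hq.1, x, hq.2, mem_of_mem_nhds hO⟩
  have heq : ∀ i ∈ cwall Q y, x.1 i = y.1 i := by
    rintro i ⟨q, hq, h⟩
    have h1 := hy q (hyF q hq) i
    rcases h with h | h
    · rcases lt_trichotomy (x.1 i) (q.1 i) with h2 | h2 | h2
      · have := h1.1.2 h2; linarith
      · linarith
      · have := h1.1.1 h2; linarith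
    · rcases lt_trichotomy (x.1 i) (q.2 i) with h2 | h2 | h2
      · have := h1.2.2 h2; linarith
      · linarith
      · have := h1.2.1 h2; linarith
  have hEsub : cwall Q y ⊆ cwall Q x := by
    intro i hi
    have h1 := heq i hi
    obtain ⟨q, hq, h⟩ := hi
    exact ⟨q, hsub hq, by rw [h1]; exact h⟩
  have hE : cwall Q y = cwall Q x :=
    Set.eq_of_subset_of_ncard_le hEsub hcard.ge (Set.toFinite _)
  refine Set.Subset.antisymm hsub ?_
  intro q hq
  refine ⟨hq.1, fun i => ?_⟩
  have h1 := hy q (hxF q hq) i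
  have h2 := hq.2 i
  constructor
  · rcases h2.1.lt_or_eq with h3 | h3
    · exact (h1.1.1 h3).le
    · have : i ∈ cwall Q y := by rw [hE]; exact ⟨q, hq, Or.inl h3.symm⟩
      rw [← heq i this]; exact h2.1
  · rcases h2.2.lt_or_eq with h3 | h3
    · exact (h1.2.2 h3).le
    · have : i ∈ cwall Q y := by rw [hE]; exact ⟨q, hq, Or.inr h3⟩
      rw [← heq i this]; exact h2.2

theorem ccubes_act (φ : Γ →* Equiv.Perm I) (hX : ∀ g, ∀ x ∈ X, (fun i => x (φ g i)) ∈ X)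
    (Q : Set ((I → ℝ) × (I → ℝ)))
    (hQ : ∀ q ∈ Q, ∀ g, ((fun i => q.1 (φ g i), fun i => q.2 (φ g i)) : (I → ℝ) × (I → ℝ)) ∈ Q)
    (g : Γ) (x : X) (q : (I → ℝ) × (I → ℝ)) (hq : q ∈ ccubes Q x) :
    ((fun i => q.1 (φ g i), fun i => q.2 (φ g i)) : (I → ℝ) × (I → ℝ)) ∈ ccubes Q (cact φ hX g x) :=
  ⟨hQ q hq.1 g, fun i => hq.2 (φ g i)⟩

theorem cwall_act_le (φ : Γ →* Equiv.Perm I) (hX : ∀ g, ∀ x ∈ X, (fun i => x (φ g i)) ∈ X)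
    (Q : Set ((I → ℝ) × (I → ℝ)))
    (hQ : ∀ q ∈ Q, ∀ g, ((fun i => q.1 (φ g i), fun i => q.2 (φ g i)) : (I → ℝ) × (I → ℝ)) ∈ Q)
    (g : Γ) (x : X) : (cwall Q x).ncard ≤ (cwall Q (cact φ hX g x)).ncard := by
  refine Set.ncard_le_ncard_of_injOn (φ g).symm ?_ (φ g).symm.injective.injOn (Set.toFinite _)
  rintro i ⟨q, hq, h⟩
  refine ⟨_, ccubes_act φ hX Q hQ g x q hq, ?_⟩
  simpa [cact] using h

theorem cwall_act (φ : Γ →* Equiv.Perm I) (hX : ∀ g, ∀ x ∈ X, (fun i => x (φ g i)) ∈ X)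
    (Q : Set ((I → ℝ) × (I → ℝ)))
    (hQ : ∀ q ∈ Q, ∀ g, ((fun i => q.1 (φ g i), fun i => q.2 (φ g i)) : (I → ℝ) × (I → ℝ)) ∈ Q)
    (g : Γ) (x : X) : (cwall Q (cact φ hX g x)).ncard = (cwall Q x).ncard := by
  refine le_antisymm ?_ (cwall_act_le φ hX Q hQ g x)
  have := cwall_act_le φ hX Q hQ g⁻¹ (cact φ hX g x)
  rwa [cact_mul, mul_inv_cancel, cact_one] at this

theorem ccubes_act_congr (φ : Γ →* Equiv.Perm I) (hX : ∀ g, ∀ x ∈ X, (fun i => x (φ g i)) ∈ X)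
    (Q : Set ((I → ℝ) × (I → ℝ)))
    (hQ : ∀ q ∈ Q, ∀ g, ((fun i => q.1 (φ g i), fun i => q.2 (φ g i)) : (I → ℝ) × (I → ℝ)) ∈ Q)
    (g : Γ) (x y : X) (h : ccubes Q x ⊆ ccubes Q y) :
    ccubes Q (cact φ hX g x) ⊆ ccubes Q (cact φ hX g y) := by
  intro q hq
  have h1 := h (by
    have := ccubes_act φ hX Q hQ g⁻¹ _ q hq
    rwa [cact_mul, mul_inv_cancel, cact_one] at this)
  have h2 := ccubes_act φ hX Q hQ g _ _ h1
  simpa using h2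

theorem upper_abs (φ : Γ →* Equiv.Perm I) (hX : ∀ g, ∀ x ∈ X, (fun i => x (φ g i)) ∈ X)
    [LocallyCompactSpace X] (A : Set ℝ) (hA : Dense A) (hXA : ∀ x ∈ X, ∃ i, x i ∉ A)
    (U : Set (Set X)) (hUo : ∀ u ∈ U, IsOpen u) (hUc : ⋃₀ U = Set.univ)
    (hUi : ∀ u ∈ U, ∀ g x, x ∈ u → cact φ hX g x ∈ u) :
    ∃ V : Set (Set X), (∀ v ∈ V, IsOpen v) ∧ (∀ v ∈ V, ∀ g x, x ∈ v → cact φ hX g x ∈ v) ∧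
      ⋃₀ V = Set.univ ∧ (∀ v ∈ V, ∃ u ∈ U, v ⊆ u) ∧
      ∀ x, {v ∈ V | x ∈ v}.encard ≤ (Fintype.card I : ℕ∞) := by
  classical
  obtain ⟨Q, hQ, hQA, hQc, hQU, hQlf⟩ := exists_boxes φ hX A hA U hUo hUc hUi
  set f : X → ℕ := fun x => (cwall Q x).ncard with hf
  have hfact : ∀ g x, f (cact φ hX g x) = f x := cwall_act φ hX Q hQ
  have hflt : ∀ x, f x < Fintype.card I := by
    intro x
    obtain ⟨i, hi⟩ := hXA x.1 x.2
    rw [← Nat.card_eq_fintype_card, ← Set.ncard_univ]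
    apply Set.ncard_lt_ncard _ (Set.toFinite _)
    rw [Set.ssubset_univ_iff]
    intro h
    have : i ∈ cwall Q x := by rw [h]; trivial
    obtain ⟨q, hq, h | h⟩ := this
    · exact hi (h ▸ (hQA q hq.1 i).1)
    · exact hi (h ▸ (hQA q hq.1 i).2)
  set P : X → Set X := fun x => {y | f y = f x ∧ ∃ g, ccubes Q (cact φ hX g y) = ccubes Q x} with hP
  have hcongr : ∀ g x y, ccubes Q x = ccubes Q y → ccubes Q (cact φ hX g x) = ccubes Q (cact φ hX g y) := by
    intro g x y h
    exact Set.Subset.antisymm (ccubes_act_congr φ hX Q hQ g x y h.subset) (ccubes_act_congr φ hX Q hQ g y x h.superset)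
  have hself : ∀ x, x ∈ P x := fun x => ⟨rfl, 1, by rw [cact_one]⟩
  have hPsymm : ∀ x y, y ∈ P x → x ∈ P y := by
    rintro x y ⟨h1, g, h2⟩
    refine ⟨h1.symm, g⁻¹, ?_⟩
    rw [← hcongr g⁻¹ _ _ h2, cact_mul, mul_inv_cancel, cact_one]
  have hPtrans : ∀ x y z, y ∈ P x → z ∈ P y → z ∈ P x := by
    rintro x y z ⟨h1, g, h2⟩ ⟨h3, g', h4⟩
    refine ⟨h3.trans h1, g' * g, ?_⟩
    rw [← cact_mul, hcongr g _ _ h4, h2]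
  have hPeq : ∀ x y, y ∈ P x → P y = P x := by
    intro x y h
    ext z
    exact ⟨fun hz => hPtrans x y z h hz, fun hz => hPtrans y x z (hPsymm x y h) hz⟩
  have hPact : ∀ x g y, y ∈ P x → cact φ hX g y ∈ P x := by
    rintro x g y ⟨h1, g', h2⟩
    refine ⟨(hfact g y).trans h1, g⁻¹ * g', ?_⟩
    rw [cact_mul, mul_inv_cancel_left, h2]
  have hPU : ∀ S : Set X, ∃ u : Set X, (∃ x, S = P x) → u ∈ U ∧ S ⊆ u := by
    intro S
    by_cases hS : ∃ x, S = P x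
    · obtain ⟨x, rfl⟩ := hS
      obtain ⟨q, hq, hxq⟩ := hQc x
      obtain ⟨u, hu, hsub⟩ := hQU q hq
      refine ⟨u, fun _ => ⟨hu, ?_⟩⟩
      rintro y ⟨-, g, hg⟩
      have h1 : q ∈ ccubes Q (cact φ hX g y) := by rw [hg]; exact ⟨hq, hxq⟩
      have h2 := hUi u hu g⁻¹ _ (hsub h1.2)
      rwa [cact_mul, mul_inv_cancel, cact_one] at h2
    · exact ⟨∅, fun h => absurd h hS⟩
  choose uu huu using hPU
  set R : X → Set X := fun x => {y | f y = f x} \ P x with hR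
  have hRact : ∀ x g y, y ∈ R x → cact φ hX g y ∈ R x := by
    rintro x g y ⟨h1, h2⟩
    refine ⟨(hfact g y).trans h1, fun h => h2 ?_⟩
    have := hPact x g⁻¹ _ h
    rwa [cact_mul, mul_inv_cancel, cact_one] at this
  have hinf1 : ∀ S : Set X, (∀ g y, y ∈ S → cact φ hX g y ∈ S) → ∀ g y,
      Metric.infEDist (cact φ hX g y) S ≤ Metric.infEDist y S := by
    intro S hS g y
    rw [Metric.le_infEDist]
    intro z hz
    exact (Metric.infEDist_le_edist_of_mem (hS g z hz)).trans (cact_edist φ hX g y z)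
  have hinf : ∀ S : Set X, (∀ g y, y ∈ S → cact φ hX g y ∈ S) → ∀ g y,
      Metric.infEDist (cact φ hX g y) S = Metric.infEDist y S := by
    intro S hS g y
    refine le_antisymm (hinf1 S hS g y) ?_
    have := hinf1 S hS g⁻¹ (cact φ hX g y)
    rwa [cact_mul, mul_inv_cancel, cact_one] at this
  set T : X → Set X := fun x => {y | Metric.infEDist y (P x) < Metric.infEDist y (R x)} ∩ uu (P x) with hT
  have hTT : ∀ x x' y, f x = f x' → y ∈ T x → y ∈ T x' → T x = T x' := by
    intro x x' y hxx h1 h2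
    by_cases h : P x = P x'
    · have : R x = R x' := by simp only [hR, h, hxx]
      simp only [hT, this, h]
    · exfalso
      have a1 : P x' ⊆ R x := by
        intro z hz
        refine ⟨hz.1.trans hxx.symm, fun hz' => h ?_⟩
        rw [← hPeq _ _ hz, ← hPeq _ _ hz']
      have a2 : P x ⊆ R x' := by
        intro z hz
        refine ⟨hz.1.trans hxx, fun hz' => h ?_⟩
        rw [← hPeq _ _ hz, ← hPeq _ _ hz']
      have b1 : Metric.infEDist y (P x) < Metric.infEDist y (R x) := h1.1
      have b2 : Metric.infEDist y (P x') < Metric.infEDist y (R x') := h2.1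
      have b3 := Metric.infEDist_anti (x := y) a1
      have b4 := Metric.infEDist_anti (x := y) a2
      exact absurd (b1.trans_le (b3.trans (b2.le.trans b4))) (lt_irrefl _)
  have hTself : ∀ x, x ∈ T x := by
    intro x
    refine ⟨?_, (huu (P x) ⟨x, rfl⟩).2 (hself x)⟩
    have h1 : Metric.infEDist x (P x) = 0 := Metric.infEDist_zero_of_mem (hself x)
    simp only [Set.mem_ofPred_eq, h1]
    rw [pos_iff_ne_zero]
    intro h
    rw [← Metric.mem_closure_iff_infEDist_zero, mem_closure_iff_frequently] at h
    refine h ?_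
    filter_upwards [cwall_local Q hQlf x] with y hy
    rintro ⟨h2, h3⟩
    exact h3 ⟨h2, 1, by rw [cact_one]; exact hy h2⟩
  refine ⟨Set.range T, ?_, ?_, ?_, ?_, ?_⟩
  · rintro _ ⟨x, rfl⟩
    exact (isOpen_lt Metric.continuous_infEDist Metric.continuous_infEDist).inter (hUo _ (huu (P x) ⟨x, rfl⟩).1)
  · rintro _ ⟨x, rfl⟩ g y ⟨h1, h2⟩
    refine ⟨?_, hUi _ (huu (P x) ⟨x, rfl⟩).1 g y h2⟩
    simp only [Set.mem_ofPred_eq] at h1 ⊢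
    rwa [hinf _ (hPact x), hinf _ (hRact x)]
  · rw [Set.eq_univ_iff_forall]
    exact fun x => ⟨T x, ⟨x, rfl⟩, hTself x⟩
  · rintro _ ⟨x, rfl⟩
    exact ⟨_, (huu (P x) ⟨x, rfl⟩).1, Set.inter_subset_right⟩
  · intro y
    have hch : ∀ v : Set X, ∃ k : ℕ, v ∈ Set.range T → ∃ x, v = T x ∧ k = f x := by
      intro v
      by_cases hv : v ∈ Set.range T
      · obtain ⟨x, rfl⟩ := hv
        exact ⟨f x, fun _ => ⟨x, rfl, rfl⟩⟩
      · exact ⟨0, fun h => absurd h hv⟩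
    choose k hk using hch
    have hinj : Set.InjOn k {v ∈ Set.range T | y ∈ v} := by
      rintro v ⟨hv, hyv⟩ w ⟨hw, hyw⟩ h
      obtain ⟨x, rfl, hx⟩ := hk v hv
      obtain ⟨x', rfl, hx'⟩ := hk w hw
      exact hTT x x' y (by rw [← hx, ← hx', h]) hyv hyw
    rw [← hinj.encard_image]
    have : k '' {v ∈ Set.range T | y ∈ v} ⊆ (Finset.range (Fintype.card I) : Set ℕ) := by
      rintro _ ⟨v, ⟨hv, -⟩, rfl⟩
      obtain ⟨x, -, hx⟩ := hk v hv
      rw [hx]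
      simpa using hflt x
    refine (Set.encard_le_encard this).trans ?_
    rw [Set.encard_coe_eq_coe_finsetCard, Finset.card_range]
end upper
section final
open Topology

theorem card_idx (n : ℕ) (hn : 1 ≤ n) :
    Fintype.card (Pairs n ⊕ Fin n) = (n + 2) * (n - 1) / 2 + 1 := by
  rw [Fintype.card_sum, Fintype.card_fin]
  have h1 : Fintype.card (Pairs n) = n.choose 2 := by
    rw [Fintype.card_finset_len, Fintype.card_fin]
  rw [h1, Nat.choose_two_right]
  obtain ⟨m, rfl⟩ : ∃ m, n = m + 1 := ⟨n - 1, by omega⟩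
  simp only [Nat.add_sub_cancel]
  have : (m + 1 + 2) * m = (m + 1) * m + m * 2 := by ring
  rw [this, Nat.add_mul_div_right _ _ (by norm_num)]
  ring

/-- permutations act on the coordinates -/
def phiHom (n : ℕ) : Equiv.Perm (Fin n) →* Equiv.Perm (Pairs n ⊕ Fin n) where
  toFun σ := Equiv.sumCongr (pairPerm σ) σ
  map_one' := by rw [pairPerm_one]; ext (x | x) <;> rfl
  map_mul' σ τ := by rw [pairPerm_mul]; ext (x | x) <;> rfl

/-- unpack the coordinates -/
def unz {n : ℕ} (z : Pairs n ⊕ Fin n → ℝ) : (Pairs n → ℝ) × (Fin n → ℝ) :=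
  (fun e => z (Sum.inl e), fun i => z (Sum.inr i))

theorem unz_continuous {n : ℕ} : Continuous (unz (n := n)) :=
  (continuous_pi fun _ => continuous_apply _).prodMk (continuous_pi fun _ => continuous_apply _)

/-- parameters as one vector -/
def XS (n : ℕ) : Set (Pairs n ⊕ Fin n → ℝ) := unz ⁻¹' MMparam n

theorem XS_inv {n : ℕ} (g : Equiv.Perm (Fin n)) (x : Pairs n ⊕ Fin n → ℝ) (hx : x ∈ XS n) :
    (fun i => x (phiHom n g i)) ∈ XS n := pact_mem g hx

theorem XS_locallyClosed (n : ℕ) : IsLocallyClosed (XS n) := by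
  have : XS n = {z | ∀ i, 0 < z i} ∩ {z | (∀ (i j k : Fin n) (hij : i ≠ j) (hjk : j ≠ k) (hik : i ≠ k),
      z (Sum.inl (pairOf i k hik)) ≤ z (Sum.inl (pairOf i j hij)) + z (Sum.inl (pairOf j k hjk))) ∧
      ∑ i, z (Sum.inr i) = 1} := by
    ext z
    constructor
    · rintro ⟨⟨h1, h2⟩, h3, h4⟩
      exact ⟨by rintro (i | i); exacts [h1 i, h3 i], h2, h4⟩
    · rintro ⟨h1, h2, h4⟩
      exact ⟨⟨fun i => h1 _, h2⟩, fun i => h1 _, h4⟩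
  rw [this]
  refine ⟨_, _, ?_, ?_, rfl⟩
  · simp only [Set.ofPred_forall]
    exact isOpen_iInter_of_finite fun i => isOpen_lt continuous_const (continuous_apply i)
  · rw [Set.ofPred_and]
    refine IsClosed.inter ?_ ?_
    · simp only [Set.ofPred_forall]
      refine isClosed_iInter fun i => isClosed_iInter fun j => isClosed_iInter fun k =>
        isClosed_iInter fun _ => isClosed_iInter fun _ => isClosed_iInter fun _ => ?_
      exact isClosed_le (by fun_prop) (by fun_prop)
    · exact isClosed_eq (by fun_prop) continuous_const

/-- the shifted rationals -/
def shiftQ : Set ℝ := Set.range fun q : ℚ => (q : ℝ) + √2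

theorem shiftQ_dense : Dense shiftQ := by
  have h : DenseRange (fun q : ℚ => (q : ℝ)) := Rat.denseRange_cast
  exact (Homeomorph.addRight (√2 : ℝ)).surjective.denseRange.comp h (Homeomorph.addRight (√2 : ℝ)).continuous

theorem XS_shiftQ {n : ℕ} (hn : 1 ≤ n) (x : Pairs n ⊕ Fin n → ℝ) (hx : x ∈ XS n) : ∃ i, x i ∉ shiftQ := by
  by_contra h
  push Not at h
  have h' : ∀ i : Fin n, ∃ q : ℚ, (q : ℝ) + √2 = x (Sum.inr i) := fun i => h (Sum.inr i)
  choose q hq using h'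
  have hs : ∑ i, x (Sum.inr i) = 1 := hx.2.2
  simp only [← hq] at hs
  rw [Finset.sum_add_distrib] at hs
  simp only [Finset.sum_const, Finset.card_univ, Fintype.card_fin, nsmul_eq_mul] at hs
  have hn0 : (n : ℝ) ≠ 0 := by exact_mod_cast (by omega : n ≠ 0)
  apply irrational_sqrt_two
  refine ⟨(1 - ∑ i, q i) / n, ?_⟩
  push_cast
  rw [div_eq_iff hn0]
  linarith

theorem upper_final (n : ℕ) (hn : 1 ≤ n) :
    @CovDimLE ↥(MMparam n) (boxTop n) ((n + 2) * (n - 1) / 2) := by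
  intro U hUo hUc
  have : LocallyCompactSpace (XS n) := (XS_locallyClosed n).locallyCompactSpace
  let h : XS n → MMparam n := fun z => ⟨unz z.1, z.2⟩
  let k : MMparam n → XS n := fun x => ⟨Sum.elim x.1.1 x.1.2, x.2⟩
  have hc : Continuous h := (unz_continuous.comp continuous_subtype_val).subtype_mk _
  have kc : Continuous k := by
    refine Continuous.subtype_mk (continuous_pi ?_) _
    rintro (i | i)
    · exact (continuous_apply i).comp (continuous_fst.comp continuous_subtype_val)
    · exact (continuous_apply i).comp (continuous_snd.comp continuous_subtype_val)
  have hk : ∀ x, h (k x) = x := fun x => rfl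
  have hact : ∀ g z, h (cact (phiHom n) XS_inv g z) = ⟨pact g (h z).1, pact_mem g (h z).2⟩ := fun g z => rfl
  have kact : ∀ g (x : MMparam n), k ⟨pact g x.1, pact_mem g x.2⟩ = cact (phiHom n) XS_inv g (k x) := by
    intro g x
    apply Subtype.ext
    funext i
    rcases i with i | i <;> rfl
  obtain ⟨V, hVo, hVi, hVc, hVr, hVn⟩ := upper_abs (phiHom n) XS_inv shiftQ shiftQ_dense (XS_shiftQ hn)
    ((fun u => h ⁻¹' u) '' U)
    (by
      rintro _ ⟨u, hu, rfl⟩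
      exact ((boxTop_open_iff u).mp (hUo u hu)).1.preimage hc)
    (by
      rw [Set.eq_univ_iff_forall]
      intro z
      obtain ⟨u, hu, hz⟩ : h z ∈ ⋃₀ U := by rw [hUc]; trivial
      exact ⟨_, ⟨u, hu, rfl⟩, hz⟩)
    (by
      rintro _ ⟨u, hu, rfl⟩ g x hx
      exact ((boxTop_open_iff u).mp (hUo u hu)).2 g _ hx)
  refine ⟨(fun v => k ⁻¹' v) '' V, ?_, ?_, ?_, ?_⟩
  · rintro _ ⟨v, hv, rfl⟩
    rw [boxTop_open_iff]
    refine ⟨(hVo v hv).preimage kc, fun σ x hx => ?_⟩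
    rw [Set.mem_preimage, kact]
    exact hVi v hv σ _ hx
  · rw [Set.eq_univ_iff_forall]
    intro z
    obtain ⟨u, hu, hz⟩ : k z ∈ ⋃₀ V := by rw [hVc]; trivial
    exact ⟨_, ⟨u, hu, rfl⟩, hz⟩
  · rintro _ ⟨v, hv, rfl⟩
    obtain ⟨_, ⟨u, hu, rfl⟩, hvu⟩ := hVr v hv
    exact ⟨u, hu, fun x hx => hvu hx⟩
  · intro x
    have : {v ∈ (fun v => k ⁻¹' v) '' V | x ∈ v} ⊆ (fun v => k ⁻¹' v) '' {v ∈ V | k x ∈ v} := by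
      rintro _ ⟨⟨v, hv, rfl⟩, hx⟩
      exact ⟨v, ⟨hv, hx⟩, rfl⟩
    refine (Set.encard_le_encard this).trans ((Set.encard_image_le _ _).trans ((hVn _).trans ?_))
    rw [card_idx n hn]
    push_cast
    exact le_rfl

theorem lower_abs {Y : Type*} [TopologicalSpace Y] (N k : ℕ) (ι : Set.Icc (0 : Fin N → ℝ) 1 → Y)
    (hι : Continuous ι) (U : Fin (N + 1) → Set Y) (hUo : ∀ i, IsOpen (U i)) (hUc : ∀ y, ∃ i, y ∈ U i)
    (h0 : ∀ k : Fin N, ∀ x, x.1 k = 0 → ι x ∉ U k.succ) (h1 : ∀ k : Fin N, ∀ x, x.1 k = 1 → ι x ∉ U 0)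
    (hk : CovDimLE Y k) : N ≤ k := by
  obtain ⟨V, hVo, hVc, hVr, hVn⟩ := hk (Set.range U) (by rintro _ ⟨i, rfl⟩; exact hUo i)
    (by
      rw [Set.eq_univ_iff_forall]
      intro y
      obtain ⟨i, hi⟩ := hUc y
      exact ⟨_, ⟨i, rfl⟩, hi⟩)
  have hch : ∀ v, ∃ i, v ∈ V → v ⊆ U i := by
    intro v
    by_cases hv : v ∈ V
    · obtain ⟨_, ⟨i, rfl⟩, hi⟩ := hVr v hv
      exact ⟨i, fun _ => hi⟩
    · exact ⟨0, fun h => absurd h hv⟩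
  choose f hf using hch
  obtain ⟨x, hx⟩ := kkm_cube N (fun i => ι ⁻¹' ⋃₀ {v ∈ V | f v = i})
    (fun i => (isOpen_sUnion fun v hv => hVo v hv.1).preimage hι)
    (by
      intro x
      obtain ⟨v, hv, hx⟩ : ι x ∈ ⋃₀ V := by rw [hVc]; trivial
      exact ⟨f v, v, ⟨hv, rfl⟩, hx⟩)
    (by
      rintro k x hx ⟨v, ⟨hv, hfv⟩, hxv⟩
      exact h0 k x hx (hfv ▸ hf v hv hxv))
    (by
      rintro k x hx ⟨v, ⟨hv, hfv⟩, hxv⟩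
      exact h1 k x hx (hfv ▸ hf v hv hxv))
  choose v hv hxv using hx
  have hinj : Function.Injective v := by
    intro i j hij
    rw [← (hv i).2, ← (hv j).2, hij]
  have hsub : Set.range v ⊆ {v ∈ V | ι x ∈ v} := by
    rintro _ ⟨i, rfl⟩
    exact ⟨(hv i).1, hxv i⟩
  have := hinj.encard_range.trans ((Set.encard_le_encard hsub).trans (hVn (ι x)))
  rw [ENat.card_eq_coe_fintype_card, Fintype.card_fin] at this
  have h3 : N + 1 ≤ k + 1 := by exact_mod_cast this
  omega

theorem pact_pact {n : ℕ} (σ τ : Equiv.Perm (Fin n)) (p : (Pairs n → ℝ) × (Fin n → ℝ)) :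
    pact τ (pact σ p) = pact (σ * τ) p := by
  unfold pact; rw [pairPerm_mul]; rfl

theorem pact_one {n : ℕ} (p : (Pairs n → ℝ) × (Fin n → ℝ)) : pact 1 p = p := by
  unfold pact; rw [pairPerm_one]; rfl

theorem pact_continuous {n : ℕ} (σ : Equiv.Perm (Fin n)) : Continuous (pact σ) := by
  refine Continuous.prodMk ?_ ?_
  · exact continuous_pi fun e => (continuous_apply _).comp continuous_fst
  · exact continuous_pi fun e => (continuous_apply _).comp continuous_snd

theorem lower_of_embed {n : ℕ} (N k : ℕ) (ι : Set.Icc (0 : Fin N → ℝ) 1 → MMparam n)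
    (hι : Continuous ι) (hinj : ∀ σ t t', pact σ (ι t).1 = (ι t').1 → t = t')
    (hk : @CovDimLE ↥(MMparam n) (boxTop n) k) : N ≤ k := by
  let F : Fin (N + 1) → Set (Set.Icc (0 : Fin N → ℝ) 1) :=
    Fin.cases (⋃ j : Fin N, {t | t.1 j = 1}) (fun j => {t | t.1 j = 0})
  have hcoord : ∀ j : Fin N, Continuous fun t : Set.Icc (0 : Fin N → ℝ) 1 => t.1 j :=
    fun j => (continuous_apply j).comp continuous_subtype_val
  have hF : ∀ i, IsClosed (F i) := by
    intro i
    refine Fin.cases ?_ (fun j => ?_) i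
    · exact isClosed_iUnion_of_finite fun j => isClosed_eq (hcoord j) continuous_const
    · exact isClosed_eq (hcoord j) continuous_const
  have hFe : ∀ t, ∃ i, t ∉ F i := by
    intro t
    by_contra h
    push Not at h
    have h0 := h 0
    simp only [F, Fin.cases_zero, Set.mem_iUnion, Set.mem_ofPred_eq] at h0
    obtain ⟨j, hj⟩ := h0
    have h1 := h j.succ
    simp only [F, Fin.cases_succ, Set.mem_ofPred_eq] at h1
    linarith
  let act : Equiv.Perm (Fin n) → MMparam n → MMparam n := fun σ x => ⟨pact σ x.1, pact_mem σ x.2⟩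
  have hact : ∀ σ, Continuous (act σ) := fun σ =>
    ((pact_continuous σ).comp continuous_subtype_val).subtype_mk _
  let C : Fin (N + 1) → Set (MMparam n) := fun i => ⋃ σ, act σ ⁻¹' (ι '' F i)
  have hC : ∀ i, IsClosed (C i) := fun i => isClosed_iUnion_of_finite fun σ =>
    ((hF i).isCompact.image hι).isClosed.preimage (hact σ)
  have hself : ∀ i, ∀ t ∈ F i, ι t ∈ C i := by
    intro i t ht
    exact Set.mem_iUnion.mpr ⟨1, t, ht, Subtype.ext (pact_one _).symm⟩
  have hboxι : @Continuous _ _ _ (boxTop n) ι := by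
    refine @Continuous.mk _ _ _ (boxTop n) _ fun s hs => ?_
    exact ((boxTop_open_iff s).mp hs).1.preimage hι
  refine @lower_abs _ (boxTop n) N k ι hboxι (fun i => (C i)ᶜ) ?_ ?_ ?_ ?_ hk
  · intro i
    rw [boxTop_open_iff]
    refine ⟨(hC i).isOpen_compl, fun σ x hx hx' => hx ?_⟩
    obtain ⟨τ, t, ht, he⟩ := Set.mem_iUnion.mp hx'
    refine Set.mem_iUnion.mpr ⟨σ * τ, t, ht, he.trans (Subtype.ext ?_)⟩
    exact pact_pact σ τ x.1
  · intro y
    by_contra h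
    push Not at h
    have h' : ∀ i, ∃ σ, ∃ t ∈ F i, ι t = act σ y := by
      intro i
      have := h i
      rw [Set.notMem_compl_iff] at this
      exact Set.mem_iUnion.mp this
    choose σ t ht he using h'
    obtain ⟨i, hi⟩ := hFe (t 0)
    apply hi
    have : t 0 = t i := by
      apply hinj ((σ 0)⁻¹ * σ i)
      rw [he 0, he i]
      change pact _ (pact _ y.1) = pact _ y.1
      rw [pact_pact, mul_inv_cancel_left]
    rw [this]; exact ht i
  · intro j x hx h
    exact h (hself _ x (by simpa [F] using hx))
  · intro j x hx h
    exact h (hself _ x (by simp only [F, Fin.cases_zero, Set.mem_iUnion]; exact ⟨j, hx⟩))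

/-- the weight vector used for the cube -/
noncomputable def sVec {m : ℕ} (u : Fin m → ℝ) : Fin (m + 1) → ℝ :=
  Fin.snoc (α := fun _ => ℝ) (fun i => (2 * (i : ℝ) + 1 + u i) / (4 * ((m : ℝ) + 1) ^ 2))
    (1 - ∑ i : Fin m, (2 * (i : ℝ) + 1 + u i) / (4 * ((m : ℝ) + 1) ^ 2))

theorem sVec_castSucc {m : ℕ} (u : Fin m → ℝ) (i : Fin m) :
    sVec u i.castSucc = (2 * (i : ℝ) + 1 + u i) / (4 * ((m : ℝ) + 1) ^ 2) := by
  unfold sVec; rw [Fin.snoc_castSucc]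

theorem sVec_last {m : ℕ} (u : Fin m → ℝ) :
    sVec u (Fin.last m) = 1 - ∑ i : Fin m, (2 * (i : ℝ) + 1 + u i) / (4 * ((m : ℝ) + 1) ^ 2) := by
  unfold sVec; rw [Fin.snoc_last]

theorem sVec_sum {m : ℕ} (u : Fin m → ℝ) : ∑ i, sVec u i = 1 := by
  rw [Fin.sum_univ_castSucc, sVec_last]
  simp only [sVec_castSucc]
  ring

theorem sVec_cont {m : ℕ} : Continuous (sVec (m := m)) := by
  refine continuous_pi fun i => ?_
  induction i using Fin.lastCases with
  | last => simp only [sVec_last]; fun_prop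
  | cast i => simp only [sVec_castSucc]; fun_prop

theorem sVec_bd {m : ℕ} (u : Fin m → ℝ) (h1 : ∀ i, u i ≤ 1) (i : Fin m) :
    (2 * (i : ℝ) + 1 + u i) / (4 * ((m : ℝ) + 1) ^ 2) ≤ 1 / (2 * ((m : ℝ) + 1)) := by
  rw [div_le_div_iff₀ (by positivity) (by positivity)]
  have hi : (i : ℝ) + 1 ≤ m := by exact_mod_cast i.2
  have := h1 i
  have hm : (0 : ℝ) ≤ m := by positivity
  nlinarith

theorem sVec_last_ge {m : ℕ} (u : Fin m → ℝ) (h1 : ∀ i, u i ≤ 1) : 1 / 2 < sVec u (Fin.last m) := by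
  rw [sVec_last]
  have := Finset.sum_le_sum (s := Finset.univ) fun i _ => sVec_bd u h1 i
  rw [Finset.sum_const, Finset.card_univ, Fintype.card_fin, nsmul_eq_mul] at this
  have h2 : (m : ℝ) * (1 / (2 * ((m : ℝ) + 1))) < 1 / 2 := by
    rw [mul_one_div, div_lt_div_iff₀ (by positivity) (by positivity)]
    linarith
  linarith

theorem sVec_pos {m : ℕ} (u : Fin m → ℝ) (h0 : ∀ i, 0 ≤ u i) (h1 : ∀ i, u i ≤ 1) (i : Fin (m + 1)) :
    0 < sVec u i := by
  induction i using Fin.lastCases with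
  | last => linarith [sVec_last_ge u h1]
  | cast i =>
    rw [sVec_castSucc]
    have := h0 i
    positivity

theorem sVec_mono {m : ℕ} (u : Fin m → ℝ) (h0 : ∀ i, 0 ≤ u i) (h1 : ∀ i, u i ≤ 1) : StrictMono (sVec u) := by
  intro i j hij
  induction j using Fin.lastCases with
  | last =>
    induction i using Fin.lastCases with
    | last => exact absurd hij (lt_irrefl _)
    | cast i =>
      rw [sVec_castSucc]
      refine (sVec_bd u h1 i).trans_lt (lt_of_le_of_lt ?_ (sVec_last_ge u h1))
      rw [div_le_div_iff₀ (by positivity) (by positivity)]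
      have hm : (0 : ℝ) ≤ m := by positivity
      linarith
  | cast j =>
    induction i using Fin.lastCases with
    | last => exact absurd hij (not_lt.mpr (Fin.le_last _))
    | cast i =>
      rw [sVec_castSucc, sVec_castSucc]
      have hij' : i < j := by simpa using hij
      have h2 : (i : ℝ) + 1 ≤ j := by exact_mod_cast hij'
      have := h0 j
      have := h1 i
      refine div_lt_div_of_pos_right ?_ (by positivity)
      linarith

theorem sVec_inj {m : ℕ} (u v : Fin m → ℝ) (h : sVec u = sVec v) : u = v := by
  funext i
  have h1 := congrFun h i.castSucc
  rw [sVec_castSucc, sVec_castSucc] at h1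
  have hp : (4 * ((m : ℝ) + 1) ^ 2) ≠ 0 := by positivity
  rw [div_left_inj' hp] at h1
  linarith

theorem perm_eq_one {n : ℕ} (σ : Equiv.Perm (Fin n)) (h : StrictMono σ) : σ = 1 := by
  have : (σ : Fin n → Fin n) = id := by
    refine (StrictMono.range_inj h strictMono_id).mp ?_
    rw [σ.surjective.range_eq]; simp
  ext i
  rw [this]; rfl

theorem lower_final (n : ℕ) (hn : 1 ≤ n) (k : ℕ)
    (hk : @CovDimLE ↥(MMparam n) (boxTop n) k) : (n + 2) * (n - 1) / 2 ≤ k := by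
  obtain ⟨m, rfl⟩ : ∃ m, n = m + 1 := ⟨n - 1, by omega⟩
  have hcard : Fintype.card (Pairs (m + 1) ⊕ Fin m) = (m + 1 + 2) * (m + 1 - 1) / 2 := by
    have := card_idx (m + 1) hn
    rw [Fintype.card_sum, Fintype.card_fin] at this ⊢
    omega
  generalize (m + 1 + 2) * (m + 1 - 1) / 2 = N at hcard ⊢
  let e : Pairs (m + 1) ⊕ Fin m ≃ Fin N := Fintype.equivFinOfCardEq hcard
  have hmem : ∀ t : Set.Icc (0 : Fin N → ℝ) 1,
      ((fun p => 1 + t.1 (e (Sum.inl p)), sVec fun i => t.1 (e (Sum.inr i))) :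
        (Pairs (m + 1) → ℝ) × (Fin (m + 1) → ℝ)) ∈ MMparam (m + 1) := by
    intro t
    have h0 : ∀ i, 0 ≤ t.1 i := fun i => t.2.1 i
    have h1 : ∀ i, t.1 i ≤ 1 := fun i => t.2.2 i
    refine ⟨⟨fun p => by have := h0 (e (Sum.inl p)); dsimp only; linarith, ?_⟩,
      sVec_pos _ (fun i => h0 _) (fun i => h1 _), sVec_sum _⟩
    intro i j l hij hjl hil
    have := h1 (e (Sum.inl (pairOf i l hil)))
    have := h0 (e (Sum.inl (pairOf i j hij)))
    have := h0 (e (Sum.inl (pairOf j l hjl)))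
    dsimp only
    linarith
  have hcoord : ∀ j : Fin N, Continuous fun t : Set.Icc (0 : Fin N → ℝ) 1 => t.1 j :=
    fun j => (continuous_apply j).comp continuous_subtype_val
  refine lower_of_embed N k (fun t => ⟨_, hmem t⟩) ?_ ?_ hk
  · refine Continuous.subtype_mk (Continuous.prodMk ?_ ?_) _
    · exact continuous_pi fun p => continuous_const.add (hcoord _)
    · exact sVec_cont.comp (continuous_pi fun i => hcoord _)
  · intro σ t t' h
    have hm : ∀ t : Set.Icc (0 : Fin N → ℝ) 1, StrictMono (sVec fun i => t.1 (e (Sum.inr i))) :=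
      fun t => sVec_mono _ (fun i => t.2.1 _) (fun i => t.2.2 _)
    have h2 : (fun i => sVec (fun i => t.1 (e (Sum.inr i))) (σ i)) = sVec fun i => t'.1 (e (Sum.inr i)) :=
      congrArg Prod.snd h
    have hσ : σ = 1 := by
      apply perm_eq_one
      intro i j hij
      rw [← (hm t).lt_iff_lt]
      have h3 := hm t' hij
      rw [← h2] at h3
      exact h3
    subst hσ
    rw [pact_one] at h
    have e1 : (fun p => 1 + t.1 (e (Sum.inl p))) = fun p => 1 + t'.1 (e (Sum.inl p)) := congrArg Prod.fst h
    have e2 := sVec_inj _ _ (congrArg Prod.snd h)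
    apply Subtype.ext
    funext j
    obtain ⟨j, rfl⟩ := e.surjective j
    rcases j with p | i
    · have := congrFun e1 p
      linarith
    · exact congrFun e2 i
end final

/-- The space `X_{=n}` of mm-isomorphism classes of metric measure spaces whose support has
exactly `n` points, with the box distance, has covering dimension `(n+2)(n-1)/2`. -/
theorem stmt15 (n : ℕ) (hn : 1 ≤ n) :
    @covDim ↥(MMparam n) (boxTop n) = (↑((n + 2) * (n - 1) / 2) : ℕ∞) := by
  refine le_antisymm (sInf_le ⟨_, rfl, upper_final n hn⟩) (le_sInf ?_)
  rintro _ ⟨k, rfl, hk⟩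
  exact_mod_cast lower_final n hn k hk
end

section
/- The space GH_{≤n} of isometry classes of metric spaces with at most n points, with the Gromov-Hausdorff distance, has covering dimension exactly n(n−1)/2. -/
theorem disjoint_family {X : Type*} [TopologicalSpace X] [SecondCountableTopology X]
    (Z : Set X) (U : Set (Set X))
    (hZ : ∀ z ∈ Z, ∃ W W' : Set X, IsOpen W ∧ IsClosed W' ∧ W ⊆ W' ∧ W' ∩ Z ⊆ W ∧ z ∈ W ∧
      ∃ u ∈ U, W ⊆ u) :
    ∃ V : Set (Set X), (∀ v ∈ V, IsOpen v) ∧ Z ⊆ ⋃₀ V ∧ (∀ v ∈ V, ∃ u ∈ U, v ⊆ u) ∧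
      ∀ x : X, {v ∈ V | x ∈ v}.Subsingleton := by
  classical
  choose! W W' hWo hWc hWW hWZ hzW u hu hWu using hZ
  obtain ⟨T, hTc, hT⟩ := TopologicalSpace.isOpen_iUnion_countable (fun z : Z => W z)
    (fun z => hWo z z.2)
  rcases T.eq_empty_or_nonempty with rfl | hTne
  · refine ⟨∅, by simp, ?_, by simp, by simp⟩
    intro z hz
    have : z ∈ ⋃ z : Z, W z := Set.mem_iUnion.2 ⟨⟨z, hz⟩, hzW z hz⟩
    rw [← hT] at this
    simp at this
  obtain ⟨e, rfl⟩ := hTc.exists_eq_range hTne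
  let V : ℕ → Set X := fun k => W (e k) \ ⋃ l ∈ Finset.range k, W' (e l)
  have hdisj : ∀ x j k, x ∈ V j → x ∈ V k → j = k := by
    have : ∀ x j k, j < k → x ∈ V j → x ∈ V k → False := by
      intro x j k hjk hj hk
      apply hk.2
      simp only [Set.mem_iUnion]
      exact ⟨j, by simpa using hjk, hWW _ (e j).2 hj.1⟩
    intro x j k hj hk
    rcases lt_trichotomy j k with h | h | h
    · exact (this x j k h hj hk).elim
    · exact h
    · exact (this x k j h hk hj).elim
  refine ⟨Set.range V, ?_, ?_, ?_, ?_⟩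
  · rintro _ ⟨k, rfl⟩
    refine (hWo _ (e k).2).sdiff ?_
    exact Set.Finite.isClosed_biUnion (Finset.finite_toSet _) (fun l _ => hWc _ (e l).2)
  · intro z hz
    have : z ∈ ⋃ z : Z, W z := Set.mem_iUnion.2 ⟨⟨z, hz⟩, hzW z hz⟩
    rw [← hT] at this
    simp only [Set.biUnion_range, Set.mem_iUnion] at this
    refine ⟨V (Nat.find this), ⟨_, rfl⟩, Nat.find_spec this, ?_⟩
    simp only [Set.mem_iUnion, not_exists]
    intro l hl h
    exact Nat.find_min this (by simpa using hl) (hWZ _ (e l).2 ⟨h, hz⟩)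
  · rintro _ ⟨k, rfl⟩
    exact ⟨_, hu _ (e k).2, Set.sdiff_subset.trans (hWu _ (e k).2)⟩
  · rintro x _ ⟨⟨j, rfl⟩, hj⟩ _ ⟨⟨k, rfl⟩, hk⟩
    rw [hdisj x j k hj hk]

theorem covDimLE_of_decomp {X : Type*} [TopologicalSpace X] [SecondCountableTopology X] (N : ℕ)
    (Z : Fin (N + 1) → Set X) (hcov : ∀ x, ∃ i, x ∈ Z i)
    (hZ : ∀ i, ∀ z ∈ Z i, ∀ O : Set X, IsOpen O → z ∈ O → 
      ∃ W W' : Set X, IsOpen W ∧ IsClosed W' ∧ W ⊆ W' ∧ W' ∩ Z i ⊆ W ∧ z ∈ W ∧ W ⊆ O) :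
    CovDimLE X N := by
  intro U hU hUc
  have : ∀ i, ∃ V : Set (Set X), (∀ v ∈ V, IsOpen v) ∧ Z i ⊆ ⋃₀ V ∧ (∀ v ∈ V, ∃ u ∈ U, v ⊆ u) ∧
      ∀ x : X, {v ∈ V | x ∈ v}.Subsingleton := by
    intro i
    apply disjoint_family
    intro z hz
    obtain ⟨u, hu, hzu⟩ : z ∈ ⋃₀ U := by rw [hUc]; trivial
    obtain ⟨W, W', a, b, c, d, e, f⟩ := hZ i z hz u (hU u hu) hzu
    exact ⟨W, W', a, b, c, d, e, u, hu, f⟩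
  choose V h1 h2 h3 h4 using this
  refine ⟨⋃ i, V i, ?_, ?_, ?_, ?_⟩
  · intro v hv
    obtain ⟨i, hi⟩ := Set.mem_iUnion.1 hv
    exact h1 i v hi
  · rw [Set.eq_univ_iff_forall]
    intro x
    obtain ⟨i, hi⟩ := hcov x
    obtain ⟨v, hv, hx⟩ := h2 i hi
    exact ⟨v, Set.mem_iUnion.2 ⟨i, hv⟩, hx⟩
  · intro v hv
    obtain ⟨i, hi⟩ := Set.mem_iUnion.1 hv
    exact h3 i v hi
  · intro x
    have : {v | v ∈ ⋃ i, V i ∧ x ∈ v} ⊆ ⋃ i, {v | v ∈ V i ∧ x ∈ v} := by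
      rintro v ⟨hv, hx⟩
      obtain ⟨i, hi⟩ := Set.mem_iUnion.1 hv
      exact Set.mem_iUnion.2 ⟨i, hi, hx⟩
    choose! f hf using (fun i (h : {v | v ∈ V i ∧ x ∈ v}.Nonempty) => h)
    have h5 : (⋃ i, {v | v ∈ V i ∧ x ∈ v}) ⊆ Set.range f := by
      intro v hv
      obtain ⟨i, hi⟩ := Set.mem_iUnion.1 hv
      exact ⟨i, h4 i x (hf i ⟨v, hi⟩) hi⟩
    refine (Set.encard_le_encard (this.trans h5)).trans ?_
    rw [← Set.image_univ]
    refine (Set.encard_image_le _ _).trans ?_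
    rw [Set.encard_univ]
    simp

open GromovHausdorff

theorem gh_transfer (p q : GHSpace) (δ : ℝ) (h : dist p q < δ) :
    ∃ g : p.Rep → q.Rep, (∀ a b, |dist (g a) (g b) - dist a b| < 2 * δ) ∧
      ∀ b, ∃ a, dist (g a) b < 2 * δ := by
  rw [dist_ghDist] at h
  obtain ⟨Φ, Ψ, hΦ, hΨ, he⟩ := ghDist_eq_hausdorffDist p.Rep q.Rep
  rw [he] at h
  have fin : Metric.hausdorffEDist (Set.range Φ) (Set.range Ψ) ≠ ⊤ :=
    Metric.hausdorffEDist_ne_top_of_nonempty_of_bounded (Set.range_nonempty _)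
      (Set.range_nonempty _) (isCompact_range hΦ.continuous).isBounded
      (isCompact_range hΨ.continuous).isBounded
  have h1 : ∀ a, ∃ b, dist (Φ a) (Ψ b) < δ := by
    intro a
    obtain ⟨_, ⟨b, rfl⟩, hb⟩ := Metric.exists_dist_lt_of_hausdorffDist_lt (Set.mem_range_self a) h fin
    exact ⟨b, hb⟩
  have h2 : ∀ b, ∃ a, dist (Φ a) (Ψ b) < δ := by
    intro b
    obtain ⟨_, ⟨a, rfl⟩, hb⟩ := Metric.exists_dist_lt_of_hausdorffDist_lt' (Set.mem_range_self b) h fin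
    exact ⟨a, hb⟩
  choose g hg using h1
  refine ⟨g, fun a b => ?_, fun b => ?_⟩
  · rw [← hΦ.dist_eq a b, ← hΨ.dist_eq, abs_lt]
    have := hg a
    have := hg b
    have t1 := dist_triangle4 (Φ a) (Ψ (g a)) (Ψ (g b)) (Φ b)
    have t2 := dist_triangle4 (Ψ (g a)) (Φ a) (Φ b) (Ψ (g b))
    rw [dist_comm (Ψ (g b)) (Φ b)] at t1
    rw [dist_comm (Ψ (g a)) (Φ a)] at t2
    constructor <;> linarith
  · obtain ⟨a, ha⟩ := h2 b
    refine ⟨a, ?_⟩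
    rw [← hΨ.dist_eq]
    have := dist_triangle_left (Ψ (g a)) (Ψ b) (Φ a)
    linarith [hg a]

theorem gh_le {X Y : Type*} [MetricSpace X] [CompactSpace X] [Nonempty X] [MetricSpace Y]
    [CompactSpace Y] [Nonempty Y] (f : X → Y) (hf : Function.Surjective f) (ε : ℝ)
    (h : ∀ a b, |dist a b - dist (f a) (f b)| ≤ ε) : ghDist X Y ≤ ε / 2 := by
  have := ghDist_le_of_approx_subsets (s := (Set.univ : Set X)) (fun x => f x.1) (ε₁ := 0) (ε₂ := ε) (ε₃ := 0)
    (fun x => ⟨x, trivial, by simp⟩) (fun y => by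
      obtain ⟨x, rfl⟩ := hf y
      exact ⟨⟨x, trivial⟩, by simp⟩) (fun x y => h x y)
  simpa using this

theorem exists_pos_le_of_finite {ι : Type*} [Finite ι] (d : ι → ℝ) (hd : ∀ i, 0 < d i) :
    ∃ δ > 0, ∀ i, δ ≤ d i := by
  rcases isEmpty_or_nonempty ι with h | h
  · exact ⟨1, one_pos, fun i => (h.false i).elim⟩
  · obtain ⟨i, hi⟩ := Finite.exists_min d
    exact ⟨d i, hd i, hi⟩

theorem isOpen_boxes (n : ℕ) (Y : Type) [Finite Y] (lo hi : Y → Y → ℝ) (e : ℝ) (he : 0 < e)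
    (hlo : ∀ y y', y ≠ y' → e ≤ lo y y') :
    IsOpen {p : ↥{p : GHSpace | Finite p.Rep ∧ Nat.card p.Rep ≤ n} |
      ∃ f : p.1.Rep → Y, Function.Surjective f ∧
        ∀ a b, lo (f a) (f b) < dist a b ∧ dist a b < hi (f a) (f b)} := by
  rw [Metric.isOpen_iff]
  rintro p ⟨f, hf, hd⟩
  have : Finite p.1.Rep := p.2.1
  obtain ⟨δ, hδ, h⟩ := exists_pos_le_of_finite
    (fun ab : p.1.Rep × p.1.Rep => min e (min (dist ab.1 ab.2 - lo (f ab.1) (f ab.2))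
      (hi (f ab.1) (f ab.2) - dist ab.1 ab.2))) (by
      rintro ⟨a, b⟩
      have := hd a b
      simp only [lt_min_iff]
      exact ⟨he, by linarith, by linarith⟩)
  have h : ∀ a b, δ ≤ e ∧ δ ≤ dist a b - lo (f a) (f b) ∧ δ ≤ hi (f a) (f b) - dist a b := by
    intro a b
    simpa only [le_min_iff] using h (a, b)
  refine ⟨δ / 2, by positivity, fun p' hp' => ?_⟩
  obtain ⟨g, hg1, hg2⟩ := gh_transfer p'.1 p.1 (δ / 2) hp'
  refine ⟨f ∘ g, fun y => ?_, fun a b => ?_⟩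
  · obtain ⟨c, rfl⟩ := hf y
    obtain ⟨a, ha⟩ := hg2 c
    refine ⟨a, ?_⟩
    by_contra hne
    have h1 := hlo _ _ hne
    have h2 := hd (g a) c
    have h3 := h (g a) c
    simp only [Function.comp] at h1
    linarith
  · have h1 := hg1 a b
    have h2 := h (g a) (g b)
    rw [abs_lt] at h1
    simp only [Function.comp]
    constructor <;> linarith

theorem isClosed_boxes (n : ℕ) (Y : Type) [Finite Y] (lo hi : Y → Y → ℝ) (e : ℝ) (he : 0 < e)
    (hlo : ∀ y y', y ≠ y' → e ≤ lo y y') :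
    IsClosed {p : ↥{p : GHSpace | Finite p.Rep ∧ Nat.card p.Rep ≤ n} |
      ∃ f : p.1.Rep → Y, Function.Surjective f ∧
        ∀ a b, lo (f a) (f b) ≤ dist a b ∧ dist a b ≤ hi (f a) (f b)} := by
  rw [← isOpen_compl_iff, Metric.isOpen_iff]
  intro p hp
  have : Finite p.1.Rep := p.2.1
  have hex : ∀ f : p.1.Rep → Y, ∃ δ > 0, Function.Surjective f → ∃ a b,
      dist a b + δ ≤ lo (f a) (f b) ∨ hi (f a) (f b) + δ ≤ dist a b := by
    intro f
    by_cases hf : Function.Surjective f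
    · have h1 : ¬ ∀ a b, lo (f a) (f b) ≤ dist a b ∧ dist a b ≤ hi (f a) (f b) := 
        fun h => hp ⟨f, hf, h⟩
      simp only [not_forall, not_and_or, not_le] at h1
      obtain ⟨a, b, h | h⟩ := h1
      · exact ⟨lo (f a) (f b) - dist a b, by linarith, fun _ => ⟨a, b, Or.inl (by linarith)⟩⟩
      · exact ⟨dist a b - hi (f a) (f b), by linarith, fun _ => ⟨a, b, Or.inr (by linarith)⟩⟩
    · exact ⟨1, one_pos, fun h => (hf h).elim⟩
  choose d hd hd2 using hex
  obtain ⟨δ', hδ', h⟩ := exists_pos_le_of_finite d hd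
  obtain ⟨δ, hδ, hδe, hδδ⟩ : ∃ δ > 0, δ ≤ e ∧ δ ≤ δ' := 
    ⟨min e δ', by positivity, min_le_left _ _, min_le_right _ _⟩
  refine ⟨δ / 2, by positivity, fun p' hp' => ?_⟩
  rintro ⟨f, hf, hf2⟩
  obtain ⟨g, hg1, hg2⟩ := gh_transfer p.1 p'.1 (δ / 2) (by rw [dist_comm]; exact hp')
  have hs : Function.Surjective (f ∘ g) := by
    intro y
    obtain ⟨c, rfl⟩ := hf y
    obtain ⟨a, ha⟩ := hg2 c
    refine ⟨a, ?_⟩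
    by_contra hne
    have h1 := hlo _ _ hne
    have h2 := hf2 (g a) c
    simp only [Function.comp] at h1
    linarith
  obtain ⟨a, b, hab⟩ := hd2 _ hs
  have h1 := hg1 a b
  have h2 := hf2 (g a) (g b)
  have h3 := h (f ∘ g)
  rw [abs_lt] at h1
  simp only [Function.comp] at hab h3
  rcases hab with hab | hab <;> linarith

theorem small_boxes (n : ℕ) (T : Set ℝ) (hT : ∀ a b : ℝ, a < b → ∃ t ∈ T, a < t ∧ t < b)
    (q : ↥{p : GHSpace | Finite p.Rep ∧ Nat.card p.Rep ≤ n})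
    (O : Set ↥{p : GHSpace | Finite p.Rep ∧ Nat.card p.Rep ≤ n}) (hO : IsOpen O) (hq : q ∈ O) :
    ∃ W W' : Set ↥{p : GHSpace | Finite p.Rep ∧ Nat.card p.Rep ≤ n},
      IsOpen W ∧ IsClosed W' ∧ W ⊆ W' ∧
      W' ∩ {p | ∀ a b : p.1.Rep, 0 < dist a b → dist a b ∉ T} ⊆ W ∧ q ∈ W ∧ W ⊆ O := by
  classical
  obtain ⟨ε, hε, hball⟩ := Metric.isOpen_iff.1 hO q hq
  have : Finite q.1.Rep := q.2.1
  obtain ⟨e, he, hemin⟩ := exists_pos_le_of_finite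
    (fun yy : {yy : q.1.Rep × q.1.Rep // yy.1 ≠ yy.2} => dist yy.1.1 yy.1.2 / 2)
    (fun yy => half_pos (dist_pos.2 yy.2))
  have hemin : ∀ y y' : q.1.Rep, y ≠ y' → e < dist y y' := by
    intro y y' h
    have h1 := hemin ⟨(y, y'), h⟩
    have h2 := dist_pos.2 h
    simp only at h1
    linarith
  have hhi : ∀ y y' : q.1.Rep, ∃ t ∈ T, dist y y' < t ∧ t < dist y y' + ε := 
    fun y y' => hT _ _ (by linarith)
  have hlo : ∀ y y' : q.1.Rep, ∃ t, (y = y' → t = -1) ∧ 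
      (y ≠ y' → t ∈ T ∧ e < t ∧ dist y y' - ε < t ∧ t < dist y y') := by
    intro y y'
    by_cases h : y = y'
    · exact ⟨-1, fun _ => rfl, fun h' => (h' h).elim⟩
    · obtain ⟨t, ht, h1, h2⟩ := hT (max e (dist y y' - ε)) (dist y y') 
        (max_lt (hemin y y' h) (by linarith))
      rw [max_lt_iff] at h1
      exact ⟨t, fun h' => (h h').elim, fun _ => ⟨ht, h1.1, h1.2, h2⟩⟩
  choose hi hiT hi1 hi2 using hhi
  choose lo lo0 lo1 using hlo
  have hle : ∀ y y', y ≠ y' → e ≤ lo y y' := fun y y' h => (lo1 y y' h).2.1.le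
  refine ⟨_, _, isOpen_boxes n q.1.Rep lo hi e he hle, isClosed_boxes n q.1.Rep lo hi e he hle, 
    ?_, ?_, ?_, ?_⟩
  · rintro p ⟨f, hf, h⟩
    exact ⟨f, hf, fun a b => ⟨(h a b).1.le, (h a b).2.le⟩⟩
  · rintro p ⟨⟨f, hf, h⟩, hp⟩
    refine ⟨f, hf, fun a b => ⟨lt_of_le_of_ne (h a b).1 ?_, lt_of_le_of_ne (h a b).2 ?_⟩⟩
    · intro heq
      by_cases hab : f a = f b
      · have := lo0 _ _ hab
        have := dist_nonneg (x := a) (y := b)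
        linarith
      · obtain ⟨h1, h2, -⟩ := lo1 _ _ hab
        rw [heq] at h1 h2
        exact hp a b (he.trans h2) h1
    · intro heq
      have h1 := hiT (f a) (f b)
      have h2 := hi1 (f a) (f b)
      rw [← heq] at h1 h2
      exact hp a b (lt_of_le_of_lt dist_nonneg h2) h1
  · refine ⟨id, Function.surjective_id, fun a b => ⟨?_, hi1 a b⟩⟩
    by_cases hab : a = b
    · have := lo0 a b hab
      have := dist_nonneg (x := a) (y := b)
      simp only [id]
      linarith
    · exact (lo1 a b hab).2.2.2
  · rintro p ⟨f, hf, h⟩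
    apply hball
    rw [Metric.mem_ball, Subtype.dist_eq, dist_ghDist]
    refine lt_of_le_of_lt (gh_le f hf ε fun a b => ?_) (by linarith)
    have h1 := h a b
    have h2 := hi2 (f a) (f b)
    rw [abs_le]
    refine ⟨?_, by linarith⟩
    by_cases hab : f a = f b
    · have := dist_nonneg (x := a) (y := b)
      rw [hab, dist_self]
      linarith
    · have := (lo1 _ _ hab).2.2.1
      linarith

theorem covDimLE_gh (n : ℕ) :
    CovDimLE ↥{p : GHSpace | Finite p.Rep ∧ Nat.card p.Rep ≤ n} (n * (n - 1) / 2) := by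
  classical
  let T : ℕ → Set ℝ := fun i => {x | ∃ r : ℚ, x = r + i * √2}
  have hT : ∀ i, ∀ a b : ℝ, a < b → ∃ t ∈ T i, a < t ∧ t < b := by
    intro i a b hab
    obtain ⟨r, h1, h2⟩ := exists_rat_btwn (show a - i * √2 < b - i * √2 by linarith)
    exact ⟨r + i * √2, ⟨r, rfl⟩, by linarith, by linarith⟩
  have hTd : ∀ i j x, x ∈ T i → x ∈ T j → i = j := by
    rintro i j x ⟨r, hr⟩ ⟨r', hr'⟩
    by_contra hne
    have h1 : ((i : ℤ) - j : ℤ) ≠ 0 := by omega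
    have h2 : ((i : ℝ) - j) ≠ 0 := by exact_mod_cast h1
    apply irrational_sqrt_two
    refine ⟨(r' - r) / (i - j), ?_⟩
    push_cast
    rw [div_eq_iff h2]
    linarith
  refine covDimLE_of_decomp _ 
    (fun i => {p | ∀ a b : p.1.Rep, 0 < dist a b → dist a b ∉ T i}) ?_ ?_
  · intro p
    by_contra! hcon
    simp only [Set.mem_ofPred_eq, not_forall, not_not] at hcon
    choose a b hpos hmem using hcon
    have : Finite p.1.Rep := p.2.1
    have := Fintype.ofFinite p.1.Rep
    let F : Fin (n * (n - 1) / 2 + 1) → {s : Sym2 p.1.Rep // ¬ s.IsDiag} := 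
      fun i => ⟨s(a i, b i), by simpa using dist_pos.1 (hpos i)⟩
    have hF : Function.Injective F := by
      intro i j hij
      have h1 : s(a i, b i) = s(a j, b j) := congrArg Subtype.val hij
      have h2 : dist (a i) (b i) = dist (a j) (b j) := by
        rcases Sym2.eq_iff.1 h1 with ⟨h, h'⟩ | ⟨h, h'⟩
        · rw [h, h']
        · rw [h, h', dist_comm]
      have := hmem i
      rw [h2] at this
      exact Fin.ext (hTd _ _ _ this (hmem j))
    have h3 := Fintype.card_le_of_injective F hF
    rw [Sym2.card_subtype_not_diag, Fintype.card_fin, ← Nat.card_eq_fintype_card] at h3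
    have h4 := Nat.choose_le_choose 2 p.2.2
    rw [Nat.choose_two_right n] at h4
    omega
  · intro i q _ O hO hqO
    exact small_boxes n (T i) (hT i) q O hO hqO

/-- cubical cup product of coboundaries, mod 2 -/
def omg {ι : Type*} [DecidableEq ι] :
    List ((ι → ℕ) → ZMod 2) → (ι → ℕ) → Finset ι → ZMod 2
  | [], _, _ => 1
  | s :: L, z, S => ∑ j ∈ S, (s (z + Pi.single j 1) + s z) * omg L (z + Pi.single j 1) (S.erase j)

theorem sum_erase_symm {ι : Type*} [DecidableEq ι] (S : Finset ι) (f : ι → ι → ZMod 2)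
    (hf : ∀ i j, f i j = f j i) : ∑ i ∈ S, ∑ j ∈ S.erase i, f i j = 0 := by
  induction S using Finset.induction_on with
  | empty => simp
  | insert a S ha ih =>
    rw [Finset.sum_insert ha, Finset.erase_insert ha]
    have : ∀ i ∈ S, ∑ j ∈ (insert a S).erase i, f i j = f i a + ∑ j ∈ S.erase i, f i j := by
      intro i hi
      have hne : a ≠ i := by rintro rfl; exact ha hi
      rw [Finset.erase_insert_of_ne hne, Finset.sum_insert]
      simp [ha]
    rw [Finset.sum_congr rfl this, Finset.sum_add_distrib, ih, add_zero]
    rw [Finset.sum_congr rfl (fun i _ => hf i a)]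
    exact CharTwo.add_self_eq_zero _

theorem sum_erase_comm {ι : Type*} [DecidableEq ι] (S : Finset ι) (f : ι → ι → ZMod 2) :
    ∑ i ∈ S, ∑ j ∈ S.erase i, f i j = ∑ j ∈ S, ∑ i ∈ S.erase j, f i j := by
  apply Finset.sum_comm'
  intro x y
  simp only [Finset.mem_erase]
  tauto

theorem omg_closed {ι : Type*} [DecidableEq ι] (L : List ((ι → ℕ) → ZMod 2)) :
    ∀ (z : ι → ℕ) (S : Finset ι),
    ∑ j ∈ S, (omg L (z + Pi.single j 1) (S.erase j) + omg L z (S.erase j)) = 0 := by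
  induction L with
  | nil => 
    intro z S
    apply Finset.sum_eq_zero
    intro j _
    exact CharTwo.add_self_eq_zero _
  | cons s L ih =>
    intro z S
    simp only [omg]
    have h1 : ∑ j ∈ S, ∑ i ∈ S.erase j, s (z + Pi.single j 1 + Pi.single i 1) *
        omg L (z + Pi.single j 1 + Pi.single i 1) ((S.erase j).erase i) = 0 := by
      apply sum_erase_symm
      intro i j
      rw [add_right_comm, Finset.erase_right_comm]
    have h2 : ∑ j ∈ S, ∑ i ∈ S.erase j, s (z + Pi.single j 1) *
        (omg L (z + Pi.single j 1 + Pi.single i 1) ((S.erase j).erase i) + 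
          omg L (z + Pi.single j 1) ((S.erase j).erase i)) = 0 := by
      apply Finset.sum_eq_zero
      intro j _
      rw [← Finset.mul_sum, ih, mul_zero]
    have h3 : ∑ j ∈ S, ∑ i ∈ S.erase j, s z * 
        omg L (z + Pi.single i 1) ((S.erase j).erase i) = 0 := by
      have h4 : ∑ j ∈ S, ∑ i ∈ S.erase j, s z * omg L z ((S.erase j).erase i) = 0 := by
        apply sum_erase_symm
        intro i j
        rw [Finset.erase_right_comm]
      have h5 : ∑ j ∈ S, ∑ i ∈ S.erase j, s z * 
        (omg L (z + Pi.single i 1) ((S.erase j).erase i) + omg L z ((S.erase j).erase i)) = 0 := by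
        apply Finset.sum_eq_zero
        intro j _
        rw [← Finset.mul_sum, ih, mul_zero]
      simp only [mul_add, Finset.sum_add_distrib, h4, add_zero] at h5
      exact h5
    have h6 : ∑ j ∈ S, ∑ i ∈ S.erase j, s (z + Pi.single j 1) *
          omg L (z + Pi.single j 1) ((S.erase j).erase i) = 
        ∑ j ∈ S, ∑ i ∈ S.erase j, s (z + Pi.single i 1) *
          omg L (z + Pi.single i 1) ((S.erase j).erase i) := by
      rw [sum_erase_comm]
      refine Finset.sum_congr rfl fun i _ => Finset.sum_congr rfl fun j _ => ?_
      rw [Finset.erase_right_comm]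
    simp only [mul_add, add_mul, Finset.sum_add_distrib] at *
    rw [h1, h3, add_zero, zero_add, ← h6, h2]

theorem omg_vanish {ι : Type*} [DecidableEq ι] (i : ι) (t : ℕ) (s : (ι → ℕ) → ZMod 2) (c : ZMod 2)
    (hs : ∀ z, z i = t → s z = c) (L : List ((ι → ℕ) → ZMod 2)) (hL : s ∈ L) :
    ∀ (z : ι → ℕ) (S : Finset ι), i ∉ S → z i = t → omg L z S = 0 := by
  induction L with
  | nil => simp at hL
  | cons s' L ih =>
    intro z S hi hz
    rw [omg]
    apply Finset.sum_eq_zero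
    intro j hj
    have hne : i ≠ j := by rintro rfl; exact hi hj
    have hz' : (z + Pi.single j 1 : ι → ℕ) i = t := by simp [hne, hz]
    rcases List.mem_cons.1 hL with rfl | h
    · rw [hs _ hz', hs _ hz, CharTwo.add_self_eq_zero, zero_mul]
    · rw [ih h _ _ (by simp [hi]) hz', mul_zero]

theorem omg_extract {ι : Type*} [DecidableEq ι] (L : List ((ι → ℕ) → ZMod 2)) :
    ∀ (z : ι → ℕ) (S : Finset ι), omg L z S ≠ 0 → ∀ s ∈ L, ∃ w w' : ι → ℕ,
      (∀ i, z i ≤ w i ∧ w i ≤ z i + if i ∈ S then 1 else 0) ∧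
      (∀ i, z i ≤ w' i ∧ w' i ≤ z i + if i ∈ S then 1 else 0) ∧ s w ≠ s w' := by
  induction L with
  | nil => simp
  | cons s' L ih =>
    intro z S h s hs
    rw [omg] at h
    obtain ⟨j, hj, hne⟩ := Finset.exists_ne_zero_of_sum_ne_zero h
    have key : ∀ w : ι → ℕ, (∀ i, (z + Pi.single j 1 : ι → ℕ) i ≤ w i ∧ 
        w i ≤ (z + Pi.single j 1 : ι → ℕ) i + if i ∈ S.erase j then 1 else 0) → 
        (∀ i, z i ≤ w i ∧ w i ≤ z i + if i ∈ S then 1 else 0) := by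
      intro w hw i
      have := hw i
      by_cases hij : i = j
      · subst hij
        simp at this
        simp [hj]; omega
      · simp [hij] at this
        exact this
    rcases List.mem_cons.1 hs with rfl | hs
    · refine ⟨z + Pi.single j 1, z, ?_, ?_, ?_⟩
      · apply key; intro i; simp
      · intro i; simp
      · intro heq
        rw [heq, CharTwo.add_self_eq_zero, zero_mul] at hne
        exact hne rfl
    · obtain ⟨w, w', h1, h2, h3⟩ := ih _ _ (right_ne_zero_of_mul hne) s hs
      exact ⟨w, w', key w h1, key w' h2, h3⟩

/-- boxes -/
def bxx {ι : Type*} [DecidableEq ι] [Fintype ι] (m : ℕ) (S : Finset ι) (c : ι → ℕ) :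
    Finset (ι → ℕ) :=
  Fintype.piFinset (fun i => if i ∈ S then Finset.range m else {c i})

theorem mem_bxx {ι : Type*} [DecidableEq ι] [Fintype ι] (m : ℕ) (S : Finset ι) (c z : ι → ℕ) :
    z ∈ bxx m S c ↔ ∀ i, (i ∈ S → z i < m) ∧ (i ∉ S → z i = c i) := by
  simp only [bxx, Fintype.mem_piFinset]
  refine forall_congr' fun i => ?_
  by_cases h : i ∈ S <;> simp [h]

theorem sum_bxx_split {ι : Type*} [DecidableEq ι] [Fintype ι] (m : ℕ) (S : Finset ι) (c : ι → ℕ)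
    (j : ι) (hj : j ∈ S) (F : (ι → ℕ) → ZMod 2) :
    ∑ z ∈ bxx m S c, F z =
      ∑ t ∈ Finset.range m, ∑ z ∈ bxx m (S.erase j) (Function.update c j t), F z := by
  rw [← Finset.sum_fiberwise_of_maps_to (s := bxx m S c) (t := Finset.range m) (g := fun z => z j)]
  · refine Finset.sum_congr rfl fun t ht => Finset.sum_congr ?_ fun _ _ => rfl
    ext z
    simp only [Finset.mem_filter, mem_bxx]
    simp only [Finset.mem_range] at ht
    constructor
    · rintro ⟨h, rfl⟩ i
      by_cases hij : i = j
      · subst hij; simp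
      · simpa [hij] using h i
    · intro h
      have hjt : z j = t := by simpa using (h j).2 (by simp)
      refine ⟨fun i => ?_, hjt⟩
      by_cases hij : i = j
      · subst hij; simp [hj, hjt, ht]
      · simpa [hij] using h i
  · intro z hz
    simpa using ((mem_bxx _ _ _ _).1 hz j).1 hj

theorem sum_bxx_shift {ι : Type*} [DecidableEq ι] [Fintype ι] (m : ℕ) (S : Finset ι) (c : ι → ℕ)
    (j : ι) (hj : j ∉ S) (F : (ι → ℕ) → ZMod 2) (t : ℕ) :
    ∑ z ∈ bxx m S (Function.update c j t), F (z + Pi.single j 1) =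
      ∑ z ∈ bxx m S (Function.update c j (t + 1)), F z := by
  refine Finset.sum_nbij' (fun z => z + Pi.single j 1) (fun z => z - Pi.single j 1) ?_ ?_ ?_ ?_ ?_
  · intro z hz
    rw [mem_bxx] at *
    intro i
    have := hz i
    by_cases hij : i = j
    · subst hij; simpa [hj] using this
    · simpa [hij] using this
  · intro z hz
    rw [mem_bxx] at *
    intro i
    have := hz i
    by_cases hij : i = j
    · subst hij; simp [hj] at *; omega
    · simpa [hij] using this
  · intro z hz
    simp
  · intro z hz
    rw [mem_bxx] at hz
    ext i
    have := hz i
    by_cases hij : i = j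
    · subst hij; simp [hj] at *; omega
    · simp [hij]
  · intro z hz; rfl

theorem sum_bxx_tele {ι : Type*} [DecidableEq ι] [Fintype ι] (m : ℕ) (S : Finset ι) (c : ι → ℕ)
    (j : ι) (hj : j ∈ S) (F : (ι → ℕ) → ZMod 2) :
    ∑ z ∈ bxx m S c, (F (z + Pi.single j 1) + F z) =
      ∑ z ∈ bxx m (S.erase j) (Function.update c j m), F z +
      ∑ z ∈ bxx m (S.erase j) (Function.update c j 0), F z := by
  rw [sum_bxx_split m S c j hj]
  simp only [Finset.sum_add_distrib]
  simp only [sum_bxx_shift m (S.erase j) c j (by simp)]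
  rw [← Finset.sum_add_distrib]
  simp only [← CharTwo.sub_eq_add]
  rw [Finset.sum_range_sub (fun t => ∑ z ∈ bxx m (S.erase j) (Function.update c j t), F z)]

theorem omg_count {ι : Type*} [DecidableEq ι] [Fintype ι] (m : ℕ) (s : ι → (ι → ℕ) → ZMod 2)
    (h0 : ∀ i z, z i = 0 → s i z = 0) (h1 : ∀ i z, z i = m → s i z = 1) (l : List ι) :
    l.Nodup → ∀ c, ∑ z ∈ bxx m l.toFinset c, omg (l.map s) z l.toFinset = 1 := by
  induction l with
  | nil =>
    intro _ c
    have : bxx m ([] : List ι).toFinset c = {c} := by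
      ext z
      rw [mem_bxx]
      simp [funext_iff]
    rw [this]; simp [omg]
  | cons j l ih =>
    intro hnd c
    rw [List.nodup_cons] at hnd
    obtain ⟨hjl, hnd⟩ := hnd
    set S := (j :: l).toFinset with hS
    have hjS : j ∈ S := by simp [hS]
    have hSj : S.erase j = l.toFinset := by simp [hS, hjl]
    have e1 : ∀ z, omg ((j :: l).map s) z S = ∑ i ∈ S, 
      (s j (z + Pi.single i 1) * omg (l.map s) (z + Pi.single i 1) (S.erase i) + 
        s j z * omg (l.map s) z (S.erase i)) := by
      intro z
      have := omg_closed (l.map s) z S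
      rw [List.map_cons, omg]
      have h2 : s j z * ∑ i ∈ S, (omg (l.map s) (z + Pi.single i 1) (S.erase i) + 
        omg (l.map s) z (S.erase i)) = 0 := by rw [this, mul_zero]
      rw [Finset.mul_sum] at h2
      rw [← add_zero (∑ i ∈ S, _ * _), ← h2, ← Finset.sum_add_distrib]
      refine Finset.sum_congr rfl fun i _ => ?_
      have h3 := CharTwo.add_self_eq_zero (s j z * omg (l.map s) (z + Pi.single i 1) (S.erase i))
      linear_combination h3
    simp only [e1]
    rw [Finset.sum_comm]
    rw [Finset.sum_congr rfl fun i hi => sum_bxx_tele m S c i hi 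
      (fun z => s j z * omg (l.map s) z (S.erase i))]
    rw [Finset.sum_eq_single_of_mem j hjS]
    · rw [hSj]
      have a1 : ∑ z ∈ bxx m l.toFinset (Function.update c j m), s j z * omg (l.map s) z l.toFinset 
         = 1 := by
        rw [← ih hnd (Function.update c j m)]
        refine Finset.sum_congr rfl fun z hz => ?_
        rw [h1, one_mul]
        rw [mem_bxx] at hz
        simpa using (hz j).2 (by simpa using hjl)
      have a2 : ∑ z ∈ bxx m l.toFinset (Function.update c j 0), s j z * omg (l.map s) z l.toFinset 
         = 0 := by
        refine Finset.sum_eq_zero fun z hz => ?_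
        rw [h0, zero_mul]
        rw [mem_bxx] at hz
        simpa using (hz j).2 (by simpa using hjl)
      rw [a1, a2, add_zero]
    · intro i hi hij
      have hil : i ∈ l := by
        have : i ∈ (j :: l).toFinset := hi
        simpa [hij] using this
      have a : ∀ t cc, (∀ z, z i = t → s i z = cc) → 
         ∑ z ∈ bxx m (S.erase i) (Function.update c i t), s j z * omg (l.map s) z (S.erase i) = 0 := by
        intro t cc ht
        refine Finset.sum_eq_zero fun z hz => ?_
        rw [omg_vanish i t (s i) cc ht (l.map s) (List.mem_map_of_mem hil) z (S.erase i) (by simp), 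
          mul_zero]
        rw [mem_bxx] at hz
        simpa using (hz i).2 (by simp)
      rw [a m 1 (h1 i), a 0 0 (h0 i), add_zero]

theorem cube_lemma {ι : Type*} [DecidableEq ι] [Fintype ι] (m : ℕ) (s : ι → (ι → ℕ) → ZMod 2)
    (h0 : ∀ i z, z i = 0 → s i z = 0) (h1 : ∀ i z, z i = m → s i z = 1) :
    ∃ z : ι → ℕ, (∀ i, z i < m) ∧ ∀ i, ∃ w w' : ι → ℕ,
      (∀ k, z k ≤ w k ∧ w k ≤ z k + 1) ∧ (∀ k, z k ≤ w' k ∧ w' k ≤ z k + 1) ∧ s i w ≠ s i w' := by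
  have h := omg_count m s h0 h1 Finset.univ.toList (Finset.nodup_toList _) 0
  rw [Finset.toList_toFinset] at h
  obtain ⟨z, hz, hne⟩ := Finset.exists_ne_zero_of_sum_ne_zero (h.trans_ne one_ne_zero)
  refine ⟨z, fun i => ((mem_bxx _ _ _ _).1 hz i).1 (by simp), fun i => ?_⟩
  obtain ⟨w, w', a, b, c⟩ := omg_extract _ _ _ hne (s i) (List.mem_map_of_mem (by simp))
  simp only [Finset.mem_univ, if_true] at a b
  exact ⟨w, w', a, b, c⟩

theorem poincare_miranda {ι : Type*} [DecidableEq ι] [Fintype ι] (g : ι → (ι → ℝ) → ℝ)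
    (hg : ∀ i, Continuous (g i))
    (h0 : ∀ i, ∀ x ∈ Set.Icc (0 : ι → ℝ) 1, x i = 0 → 0 ≤ g i x)
    (h1 : ∀ i, ∀ x ∈ Set.Icc (0 : ι → ℝ) 1, x i = 1 → g i x ≤ 0) :
    ∃ x ∈ Set.Icc (0 : ι → ℝ) 1, ∀ i, g i x = 0 := by
  classical
  by_contra! hcon
  have hK : IsCompact (Set.Icc (0 : ι → ℝ) 1) := isCompact_Icc
  have hne : (Set.Icc (0 : ι → ℝ) 1).Nonempty := ⟨0, by simp⟩
  let G : (ι → ℝ) → (ι → ℝ) := fun x i => g i x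
  have hG : Continuous G := continuous_pi hg
  obtain ⟨x0, hx0, hmin⟩ := hK.exists_isMinOn hne (hG.norm.continuousOn)
  have hpos : 0 < ‖G x0‖ := by
    obtain ⟨i, hi⟩ := hcon x0 hx0
    rw [norm_pos_iff]
    intro h
    exact hi (congrFun h i)
  have huc := hK.uniformContinuousOn_of_continuous hG.continuousOn
  rw [Metric.uniformContinuousOn_iff] at huc
  obtain ⟨δ, hδ, huc⟩ := huc _ hpos
  obtain ⟨m, hm⟩ := exists_nat_gt (1 / δ)
  have hm0 : (0 : ℝ) < m := lt_trans (by positivity) hm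
  have hmd : 1 / (m : ℝ) < δ := by
    rw [div_lt_iff₀ hδ] at hm
    rw [div_lt_iff₀ hm0]; linarith
  let sc : (ι → ℕ) → ι → ℝ := fun z i => (z i : ℝ) / m
  let s : ι → (ι → ℕ) → ZMod 2 := fun i z => 
    if z i = 0 then 0 else if z i = m then 1 else if 0 ≤ g i (sc z) then 0 else 1
  have hmne : m ≠ 0 := by rintro rfl; simp at hm0
  obtain ⟨z, hz, hzi⟩ := cube_lemma m s (by intro i z h; simp [s, h]) 
    (by intro i z h; simp [s, h, hmne])
  have hcube : ∀ w : ι → ℕ, (∀ k, z k ≤ w k ∧ w k ≤ z k + 1) → sc w ∈ Set.Icc (0 : ι → ℝ) 1 := by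
    intro w hw
    refine ⟨fun i => ?_, fun i => ?_⟩
    · simp only [sc, Pi.zero_apply]; positivity
    · simp only [sc, Pi.one_apply]
      rw [div_le_one hm0]
      have := hw i
      have := hz i
      exact_mod_cast (by omega : w i ≤ m)
  have hzc := hcube z (fun k => by simp)
  have hdist : ∀ w : ι → ℕ, (∀ k, z k ≤ w k ∧ w k ≤ z k + 1) → dist (sc w) (sc z) < δ := by
    intro w hw
    rw [dist_pi_lt_iff hδ]
    intro i
    refine lt_of_le_of_lt ?_ hmd
    simp only [sc]
    rw [Real.dist_eq, ← sub_div, abs_div, abs_of_pos hm0]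
    gcongr
    have h1 : (z i : ℝ) ≤ w i := by exact_mod_cast (hw i).1
    have h2 : (w i : ℝ) ≤ z i + 1 := by exact_mod_cast (hw i).2
    rw [abs_le]; constructor <;> linarith
  have hs0 : ∀ i w, (∀ k, z k ≤ w k ∧ w k ≤ z k + 1) → s i w = 0 → 0 ≤ g i (sc w) := by
    intro i w hw h
    by_cases a : w i = 0
    · exact h0 i _ (hcube w hw) (by simp [sc, a])
    · by_cases b : w i = m
      · simp [s, b, hmne] at h
      · by_contra hc
        simp [s, a, b, hc] at h
  have hs1 : ∀ i w, (∀ k, z k ≤ w k ∧ w k ≤ z k + 1) → s i w ≠ 0 → g i (sc w) ≤ 0 := by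
    intro i w hw h
    by_cases a : w i = 0
    · simp [s, a] at h
    · by_cases b : w i = m
      · exact h1 i _ (hcube w hw) (by simp [sc, b, hm0.ne'])
      · by_contra! hc
        simp [s, a, b, hc.le] at h
  have hlt : ‖G (sc z)‖ < ‖G x0‖ := by
    rw [pi_norm_lt_iff hpos]
    intro i
    obtain ⟨w, w', hw, hw', hne⟩ := hzi i
    have b1 : |g i (sc w) - g i (sc z)| < ‖G x0‖ := 
      lt_of_le_of_lt (dist_le_pi_dist (G (sc w)) (G (sc z)) i) 
        (huc _ (hcube w hw) _ hzc (hdist w hw))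
    have b2 : |g i (sc w') - g i (sc z)| < ‖G x0‖ := 
      lt_of_le_of_lt (dist_le_pi_dist (G (sc w')) (G (sc z)) i) 
        (huc _ (hcube w' hw') _ hzc (hdist w' hw'))
    rw [abs_lt] at b1 b2
    rw [Real.norm_eq_abs, abs_lt]
    simp only [G]
    by_cases a : s i w = 0
    · have := hs0 i w hw a
      have := hs1 i w' hw' (fun h => hne (a.trans h.symm))
      constructor <;> linarith
    · have := hs1 i w hw a
      by_cases b : s i w' = 0
      · have := hs0 i w' hw' b
        constructor <;> linarith
      · exfalso
        apply hne
        have : ∀ a b : ZMod 2, a ≠ 0 → b ≠ 0 → a = b := by decide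
        exact this _ _ a b
  exact absurd (hmin hzc) (not_le.2 hlt)

theorem not_covDimLE_of_cube {X : Type*} [TopologicalSpace X] [T2Space X] (N k : ℕ) (hk : k < N)
    (Φ : (Fin N → ℝ) → X) (hΦ : Continuous Φ) (hinj : Set.InjOn Φ (Set.Icc 0 1)) :
    ¬ CovDimLE X k := by
  classical
  intro hX
  let Q : Set (Fin N → ℝ) := Set.Icc 0 1
  have hQ : IsCompact Q := isCompact_Icc
  let fc : Fin N → ℝ → Set (Fin N → ℝ) := fun i t => Q ∩ {x | x i = t}
  have hfc : ∀ i t, IsClosed (Φ '' fc i t) := by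
    intro i t
    refine ((hQ.inter_right ?_).image hΦ).isClosed
    exact isClosed_eq (continuous_apply i) continuous_const
  let U : Set (Set X) := {u | IsOpen u ∧ ∀ i, 
    (∀ x ∈ fc i 0, Φ x ∉ u) ∨ (∀ x ∈ fc i 1, Φ x ∉ u)}
  obtain ⟨V, hVo, hVc, hVU, hord⟩ := hX U (fun u hu => hu.1) (by
    rw [Set.eq_univ_iff_forall]
    intro p
    let C : Fin N → Set X := fun i => if p ∈ Φ '' fc i 0 then Φ '' fc i 1 else Φ '' fc i 0
    have hC : ∀ i, IsClosed (C i) := by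
      intro i
      simp only [C]
      split_ifs <;> exact hfc _ _
    refine ⟨(⋃ i, C i)ᶜ, ⟨(isClosed_iUnion_of_finite hC).isOpen_compl, fun i => ?_⟩, ?_⟩
    · by_cases h : p ∈ Φ '' fc i 0
      · right
        intro x hx hxu
        apply hxu
        refine Set.mem_iUnion.2 ⟨i, ?_⟩
        simp only [C, if_pos h]
        exact ⟨x, hx, rfl⟩
      · left
        intro x hx hxu
        apply hxu
        refine Set.mem_iUnion.2 ⟨i, ?_⟩
        simp only [C, if_neg h]
        exact ⟨x, hx, rfl⟩
    · intro hp
      obtain ⟨i, hi⟩ := Set.mem_iUnion.1 hp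
      by_cases h : p ∈ Φ '' fc i 0
      · simp only [C, if_pos h] at hi
        obtain ⟨x, hx, rfl⟩ := h
        obtain ⟨y, hy, hxy⟩ := hi
        have := hinj hy.1 hx.1 hxy
        have h1 : y i = 1 := hy.2
        have h2 : x i = 0 := hx.2
        rw [this, h2] at h1
        exact zero_ne_one h1
      · simp only [C, if_neg h] at hi
        exact h hi)
  let meets : Set X → ℕ → Prop := fun v i => ∃ h : i < N, ∃ x ∈ fc ⟨i, h⟩ 0, Φ x ∈ v
  let lab : Set X → ℕ := fun v => if h : ∃ i, meets v i then Nat.find h else N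
  have lab_le : ∀ v i, meets v i → lab v ≤ i := by
    intro v i h
    have h' : ∃ i, meets v i := ⟨i, h⟩
    simp only [lab, dif_pos h']
    exact Nat.find_min' h' h
  have lab_meets : ∀ v, lab v < N → meets v (lab v) := by
    intro v h
    by_cases h' : ∃ i, meets v i
    · simp only [lab, dif_pos h']
      exact Nat.find_spec h'
    · simp only [lab, dif_neg h', lt_irrefl] at h
  have lab_N : ∀ v, lab v ≤ N := by
    intro v
    by_cases h' : ∃ i, meets v i
    · obtain ⟨i, hi⟩ := h'
      exact (lab_le v i hi).trans hi.1.le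
    · simp only [lab, dif_neg h', le_refl]
  let G : ℕ → Set (Fin N → ℝ) := fun j => ⋃ v ∈ {v ∈ V | lab v = j}, Φ ⁻¹' v
  have memG : ∀ j x, x ∈ G j ↔ ∃ v ∈ V, lab v = j ∧ Φ x ∈ v := by
    intro j x
    simp only [G, Set.mem_iUnion, Set.mem_ofPred_eq, Set.mem_preimage, exists_prop, and_assoc]
  have hGo : ∀ j, IsOpen (G j) := fun j => isOpen_biUnion fun v hv => (hVo v hv.1).preimage hΦ
  have hG0 : ∀ (i : Fin N) (x) (j : ℕ), x ∈ fc i 0 → (i : ℕ) < j → x ∉ G j := by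
    intro i x j hx hij hxj
    obtain ⟨v, hv, rfl, hxv⟩ := (memG _ _).1 hxj
    exact absurd (lab_le v i ⟨i.2, x, hx, hxv⟩) (not_le.2 hij)
  have hG1 : ∀ (i : Fin N) (x), x ∈ fc i 1 → x ∉ G i := by
    intro i x hx hxj
    obtain ⟨v, hv, hl, hxv⟩ := (memG _ _).1 hxj
    obtain ⟨u, hu, hvu⟩ := hVU v hv
    have hm := lab_meets v (by rw [hl]; exact i.2)
    rw [hl] at hm
    obtain ⟨_, y, hy, hyv⟩ := hm
    rcases hu.2 i with h | h
    · exact h y hy (hvu hyv)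
    · exact h x hx (hvu hxv)
  have hGne : ∀ j ≤ N, (G j)ᶜ.Nonempty := by
    intro j hj
    rcases hj.lt_or_eq with hj | rfl
    · exact ⟨1, hG1 ⟨j, hj⟩ 1 ⟨by simp [Q], by simp⟩⟩
    · exact ⟨0, hG0 ⟨0, by omega⟩ 0 _ ⟨by simp [Q], by simp⟩ (by simp; omega)⟩
  let φ : ℕ → (Fin N → ℝ) → ℝ := fun j x => Metric.infDist x (G j)ᶜ
  have φnn : ∀ j x, 0 ≤ φ j x := fun j x => Metric.infDist_nonneg
  have φ0 : ∀ j x, x ∉ G j → φ j x = 0 := fun j x h => Metric.infDist_zero_of_mem h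
  have φpos : ∀ j ≤ N, ∀ x, x ∈ G j ↔ 0 < φ j x := by
    intro j hj x
    constructor
    · intro h
      refine ((hGo j).isClosed_compl.notMem_iff_infDist_pos (hGne j hj)).1 (by simpa using h)
    · intro h
      by_contra h'
      rw [φ0 j x h'] at h
      exact lt_irrefl _ h
  obtain ⟨x, hxQ, hx⟩ := poincare_miranda 
    (fun (i : Fin N) x => φ i x - ∑ j ∈ Finset.Ioc (i : ℕ) N, φ j x)
    (fun i => (Metric.continuous_infDist_pt _).sub 
      (continuous_finsetSum _ fun j _ => Metric.continuous_infDist_pt _))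
    (by
      intro i x hxQ hxi
      rw [Finset.sum_eq_zero, sub_zero]
      · exact φnn _ _
      · intro j hj
        exact φ0 _ _ (hG0 i x j ⟨hxQ, hxi⟩ (Finset.mem_Ioc.1 hj).1))
    (by
      intro i x hxQ hxi
      rw [φ0 _ _ (hG1 i x ⟨hxQ, hxi⟩), zero_sub, neg_nonpos]
      exact Finset.sum_nonneg fun j _ => φnn _ _)
  have hx' : ∀ i < N, φ i x = ∑ j ∈ Finset.Ioc i N, φ j x := fun i hi => 
    sub_eq_zero.1 (hx ⟨i, hi⟩)
  obtain ⟨j0, hj0, hxj0⟩ : ∃ j ≤ N, x ∈ G j := by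
    obtain ⟨v, hv, hxv⟩ : Φ x ∈ ⋃₀ V := by rw [hVc]; trivial
    exact ⟨lab v, lab_N v, (memG _ _).2 ⟨v, hv, rfl, hxv⟩⟩
  have hN : 0 < φ N x := by
    by_contra h
    have hN0 : φ N x = 0 := le_antisymm (not_lt.1 h) (φnn _ _)
    have : ∀ d j, N - j = d → j ≤ N → φ j x = 0 := by
      intro d
      induction d using Nat.strong_induction_on with
      | _ d ih =>
        intro j hd hj
        rcases hj.lt_or_eq with hj | rfl
        · rw [hx' j hj]
          refine Finset.sum_eq_zero fun l hl => ?_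
          rw [Finset.mem_Ioc] at hl
          exact ih (N - l) (by omega) l rfl hl.2
        · exact hN0
    have h1 := (φpos j0 hj0 x).1 hxj0
    rw [this _ j0 rfl hj0] at h1
    exact lt_irrefl _ h1
  have hall : ∀ j ≤ N, x ∈ G j := by
    intro j hj
    rw [φpos j hj]
    rcases hj.lt_or_eq with hj | rfl
    · rw [hx' j hj]
      exact hN.trans_le (Finset.single_le_sum (f := fun l => φ l x) (fun l _ => φnn l x) 
        (Finset.mem_Ioc.2 ⟨hj, le_rfl⟩))
    · exact hN
  have hch : ∀ j : Fin (N + 1), ∃ v ∈ V, lab v = j ∧ Φ x ∈ v := fun j => 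
    (memG _ _).1 (hall j (by omega))
  choose f hfV hfl hfx using hch
  have hfi : Function.Injective f := by
    intro a b hab
    apply Fin.ext
    rw [← hfl a, ← hfl b, hab]
  have h1 : Set.range f ⊆ {v ∈ V | Φ x ∈ v} := by
    rintro _ ⟨j, rfl⟩
    exact ⟨hfV j, hfx j⟩
  have h2 := (Set.encard_le_encard h1).trans (hord (Φ x))
  rw [← Set.image_univ, hfi.encard_image, Set.encard_univ] at h2
  simp at h2
  omega

/-- clamped value -/
noncomputable def vall (N : ℕ) (k : Fin N) (t : ℝ) : ℝ :=
  1 + (2 * (k : ℕ) + max 0 (min t 1)) / (2 * N + 2)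

theorem vall_mem (N : ℕ) (k : Fin N) (t : ℝ) : 1 ≤ vall N k t ∧ vall N k t ≤ 2 := by
  have h0 : (0 : ℝ) ≤ max 0 (min t 1) := le_max_left _ _
  have h1 : max 0 (min t 1) ≤ (1 : ℝ) := max_le zero_le_one (min_le_right _ _)
  have h2 : ((k : ℕ) : ℝ) + 1 ≤ N := by exact_mod_cast k.2
  have h3 : (0 : ℝ) < 2 * N + 2 := by positivity
  unfold vall
  constructor
  · have : 0 ≤ (2 * ((k : ℕ) : ℝ) + max 0 (min t 1)) / (2 * N + 2) := by positivity
    linarith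
  · have : (2 * ((k : ℕ) : ℝ) + max 0 (min t 1)) / (2 * N + 2) ≤ 1 := by
      rw [div_le_one h3]; linarith
    linarith

theorem vall_inj (N : ℕ) (k k' : Fin N) (t t' : ℝ) (h : vall N k t = vall N k' t') :
    k = k' ∧ max 0 (min t 1) = max 0 (min t' 1) := by
  have h0 : (0 : ℝ) ≤ max 0 (min t 1) := le_max_left _ _
  have h1 : max 0 (min t 1) ≤ (1 : ℝ) := max_le zero_le_one (min_le_right _ _)
  have h0' : (0 : ℝ) ≤ max 0 (min t' 1) := le_max_left _ _
  have h1' : max 0 (min t' 1) ≤ (1 : ℝ) := max_le zero_le_one (min_le_right _ _)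
  have h3 : (0 : ℝ) < 2 * N + 2 := by positivity
  unfold vall at h
  have h4 : 2 * ((k : ℕ) : ℝ) + max 0 (min t 1) = 2 * ((k' : ℕ) : ℝ) + max 0 (min t' 1) := by
    have := add_left_cancel h
    field_simp at this
    exact this
  have hk : k = k' := by
    apply Fin.ext
    rcases lt_trichotomy (k : ℕ) k' with h | h | h
    · have : ((k : ℕ) : ℝ) + 1 ≤ (k' : ℕ) := by exact_mod_cast h
      linarith
    · exact h
    · have : ((k' : ℕ) : ℝ) + 1 ≤ (k : ℕ) := by exact_mod_cast h
      linarith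
  subst hk
  exact ⟨rfl, by linarith⟩

theorem vall_lip (N : ℕ) (k : Fin N) (t t' : ℝ) : |vall N k t - vall N k t'| ≤ |t - t'| := by
  have h3 : (0 : ℝ) < 2 * N + 2 := by positivity
  have h : vall N k t - vall N k t' = (max 0 (min t 1) - max 0 (min t' 1)) / (2 * N + 2) := by
    unfold vall; ring
  rw [h, abs_div, abs_of_pos h3]
  have h4 : |max 0 (min t 1) - max 0 (min t' 1)| ≤ |t - t'| := by
    refine (abs_max_sub_max_le_max _ _ _ _).trans ?_
    simp only [sub_self, abs_zero]
    refine max_le (abs_nonneg _) ((abs_min_sub_min_le_max _ _ _ _).trans ?_)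
    simp
  refine (div_le_self (abs_nonneg _) ?_).trans h4
  have : (0 : ℝ) ≤ N := by positivity
  linarith

/-- The `n` point space with distances given by `x`. -/
def PtSp (n N : ℕ) (_E : Sym2 (Fin n) → Fin N) (_x : Fin N → ℝ) : Type := Fin n

instance (n N : ℕ) (E : Sym2 (Fin n) → Fin N) (x : Fin N → ℝ) : Finite (PtSp n N E x) :=
  inferInstanceAs (Finite (Fin n))

instance (n N : ℕ) [NeZero n] (E : Sym2 (Fin n) → Fin N) (x : Fin N → ℝ) :
    Nonempty (PtSp n N E x) :=
  inferInstanceAs (Nonempty (Fin n))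

/-- distances on `PtSp` -/
noncomputable def dPt (n N : ℕ) (E : Sym2 (Fin n) → Fin N) (x : Fin N → ℝ) (i j : Fin n) : ℝ :=
  if i = j then 0 else vall N (E s(i, j)) (x (E s(i, j)))

theorem dPt_self (n N : ℕ) (E : Sym2 (Fin n) → Fin N) (x : Fin N → ℝ) (i : Fin n) :
    dPt n N E x i i = 0 := by simp [dPt]

theorem dPt_comm (n N : ℕ) (E : Sym2 (Fin n) → Fin N) (x : Fin N → ℝ) (i j : Fin n) :
    dPt n N E x i j = dPt n N E x j i := by
  rw [dPt, dPt, Sym2.eq_swap (a := i) (b := j)]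
  simp only [eq_comm (a := i) (b := j)]

theorem dPt_triangle (n N : ℕ) (E : Sym2 (Fin n) → Fin N) (x : Fin N → ℝ) (i j k : Fin n) :
    dPt n N E x i k ≤ dPt n N E x i j + dPt n N E x j k := by
  have hm := fun a b : Fin n => vall_mem N (E s(a, b)) (x (E s(a, b)))
  have h1 := hm i j
  have h2 := hm j k
  have h3 := hm i k
  simp only [dPt]
  by_cases hij : i = j
  · subst hij; simp
  · by_cases hjk : j = k
    · subst hjk; simp
    · rw [if_neg hij, if_neg hjk]
      split_ifs <;> linarith

theorem dPt_eq (n N : ℕ) (E : Sym2 (Fin n) → Fin N) (x : Fin N → ℝ) (i j : Fin n)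
    (h : dPt n N E x i j = 0) : i = j := by
  by_contra hne
  have h1 := vall_mem N (E s(i, j)) (x (E s(i, j)))
  rw [dPt, if_neg hne] at h
  linarith

theorem dPt_lip (n N : ℕ) (E : Sym2 (Fin n) → Fin N) (x y : Fin N → ℝ) (i j : Fin n) :
    |dPt n N E x i j - dPt n N E y i j| ≤ dist x y := by
  rw [dPt, dPt]
  split_ifs
  · simp
  · exact (vall_lip _ _ _ _).trans (dist_le_pi_dist x y _)

noncomputable instance (n N : ℕ) (E : Sym2 (Fin n) → Fin N) (x : Fin N → ℝ) :
    MetricSpace (PtSp n N E x) where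
  dist i j := dPt n N E x i j
  dist_self i := dPt_self n N E x i
  dist_comm i j := dPt_comm n N E x i j
  dist_triangle i j k := dPt_triangle n N E x i j k
  eq_of_dist_eq_zero {i j} h := dPt_eq n N E x i j h

theorem not_covDimLE_gh (n : ℕ) (hn : 1 ≤ n) (k : ℕ) (hk : k < n * (n - 1) / 2) :
    ¬ CovDimLE ↥{p : GHSpace | Finite p.Rep ∧ Nat.card p.Rep ≤ n} k := by
  classical
  have : NeZero n := ⟨by omega⟩
  set N := n * (n - 1) / 2 with hN
  have hcard : Fintype.card {s : Sym2 (Fin n) // ¬ s.IsDiag} = N := by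
    rw [Sym2.card_subtype_not_diag, Fintype.card_fin, Nat.choose_two_right]
  let eq := Fintype.equivFinOfCardEq hcard
  let E : Sym2 (Fin n) → Fin N := fun s => if h : ¬ s.IsDiag then eq ⟨s, h⟩ else ⟨0, by omega⟩
  have hE : ∀ l : Fin N, ∃ i j : Fin n, i ≠ j ∧ E s(i, j) = l := by
    intro l
    obtain ⟨⟨s, hs⟩, rfl⟩ := eq.surjective l
    induction s using Sym2.ind with
    | _ i j =>
      refine ⟨i, j, by simpa using hs, ?_⟩
      simp only [E, dif_pos hs]
  let Ψ : (Fin N → ℝ) → GHSpace := fun x => toGHSpace (PtSp n N E x)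
  have hmem : ∀ x, Ψ x ∈ {p : GHSpace | Finite p.Rep ∧ Nat.card p.Rep ≤ n} := by
    intro x
    have h1 : toGHSpace (Ψ x).Rep = toGHSpace (PtSp n N E x) := GHSpace.toGHSpace_rep _
    obtain ⟨e⟩ := toGHSpace_eq_toGHSpace_iff_isometryEquiv.1 h1
    refine ⟨Finite.of_equiv _ e.toEquiv.symm, ?_⟩
    rw [Nat.card_congr e.toEquiv]
    exact (Nat.card_eq_fintype_card (α := Fin n)).trans_le (by simp)
  refine not_covDimLE_of_cube N k hk (fun x => ⟨Ψ x, hmem x⟩) ?_ ?_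
  · refine Continuous.subtype_mk ?_ _
    refine (LipschitzWith.of_dist_le_mul (K := 1) fun x y => ?_).continuous
    have h1 : dist (Ψ x) (Ψ y) ≤ dist x y / 2 := by
      refine gh_le (X := PtSp n N E x) (Y := PtSp n N E y) (fun i => i) (fun i => ⟨i, rfl⟩) _ ?_
      intro i j
      exact dPt_lip n N E x y i j
    have := dist_nonneg (x := x) (y := y)
    simp only [NNReal.coe_one, one_mul]
    linarith
  · intro x hx y hy hxy
    have h1 : toGHSpace (PtSp n N E x) = toGHSpace (PtSp n N E y) := congrArg Subtype.val hxy
    obtain ⟨e⟩ := toGHSpace_eq_toGHSpace_iff_isometryEquiv.1 h1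
    ext l
    obtain ⟨i, j, hij, rfl⟩ := hE l
    let σ : Fin n → Fin n := fun i => e i
    have hσ : σ i ≠ σ j := fun h => hij (e.injective h)
    have h2 : dPt n N E y (σ i) (σ j) = dPt n N E x i j := e.dist_eq (i : PtSp n N E x) j
    rw [dPt, dPt, if_neg hij, if_neg hσ] at h2
    obtain ⟨h3, h4⟩ := vall_inj _ _ _ _ _ h2
    rw [h3] at h4
    have hc : ∀ z : Fin N → ℝ, z ∈ Set.Icc (0 : Fin N → ℝ) 1 → ∀ l, max 0 (min (z l) 1) = z l := by
      intro z hz l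
      have h5 : z l ≤ 1 := hz.2 l
      have h6 : 0 ≤ z l := hz.1 l
      rw [min_eq_left h5, max_eq_right h6]
    rw [hc x hx, hc y hy] at h4
    exact h4.symm

/-- The space `GH_{≤n}` of isometry classes of metric spaces with at most `n` points, with
the Gromov-Hausdorff distance, has covering dimension exactly `n(n-1)/2`. -/
theorem stmt16 (n : ℕ) (hn : 1 ≤ n) :
    covDim ↥{p : GromovHausdorff.GHSpace | Finite p.Rep ∧ Nat.card p.Rep ≤ n} =
      (↑(n * (n - 1) / 2) : ℕ∞) := by
  apply le_antisymm
  · exact sInf_le ⟨_, rfl, covDimLE_gh n⟩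
  · apply le_sInf
    rintro _ ⟨k, rfl, hk⟩
    by_contra h
    exact not_covDimLE_gh n hn k (by exact_mod_cast not_le.1 h) hk
end
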